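/- arXiv:1408.2311 — 10 statements merged into one kernel-verified Lean document; each statement's English description precedes it below -/
import Mathlib

section
/- Let G be a group equipped with a proper left-invariant metric d. Then every normal subgroup N of G has bounded packing in G with respect to d. -/
/-!
Fix one coset `aN` of the family. Any other coset `B` contains a point within `D + 1` of some
`x = an ∈ aN`, so by left invariance `B = xfN` with `f` in the ball of radius `D + 1` about `1`.
Since `N` is normal, `nfN = fN`, hence `B = afN`: the coset depends only on `a` and `f`. The family
therefore has at most as many members as this ball, which is finite because `d` is proper.
-/

open Pointwise

/-- A proper left-invariant metric on a group `G`, given as a distance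
function `d : G → G → ℝ`. -/
structure IsProperLeftInvMetric (G : Type*) [Group G] (d : G → G → ℝ) : Prop where
  self : ∀ x, d x x = 0
  eq_of_dist_eq_zero : ∀ x y, d x y = 0 → x = y
  symm : ∀ x y, d x y = d y x
  triangle : ∀ x y z, d x z ≤ d x y + d y z
  left_invariant : ∀ g x y, d (g * x) (g * y) = d x y
  proper : ∀ r : ℝ, 0 < r → {g : G | d 1 g ≤ r}.Finite

/-- The distance between two subsets of `G`: the infimum of distances between
their points. -/
noncomputable def cosetDist {G : Type*} [Group G] (d : G → G → ℝ) (A B : Set G) : ℝ :=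
  sInf {r : ℝ | ∃ x ∈ A, ∃ y ∈ B, d x y = r}

/-- A subgroup `H` has bounded packing in `G` with respect to `d` if for every
`D > 0` there is `n` such that any collection of (pairwise distinct) left cosets
of `H`, any two of which are at distance at most `D`, has at most `n` elements. -/
def HasBoundedPacking {G : Type*} [Group G] (d : G → G → ℝ) (H : Subgroup G) : Prop :=
  ∀ D : ℝ, 0 < D → ∃ n : ℕ, ∀ S : Set (Set G),
    (∀ A ∈ S, ∃ g : G, A = g • (H : Set G)) →
    (∀ A ∈ S, ∀ B ∈ S, cosetDist d A B ≤ D) →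
    ∀ T : Finset (Set G), ↑T ⊆ S → T.card ≤ n

/-- Every normal subgroup has bounded packing. -/
theorem normal_hasBoundedPacking {G : Type*} [Group G] (d : G → G → ℝ)
    (hd : IsProperLeftInvMetric G d) (N : Subgroup G) (hN : N.Normal) :
    HasBoundedPacking d N := by
  intro D hD
  have hfin := hd.proper (D + 1) (by linarith)
  refine ⟨hfin.toFinset.card, fun S hS hdist T hT => ?_⟩
  rcases T.eq_empty_or_nonempty with rfl | ⟨A, hA⟩
  · simp
  obtain ⟨a, rfl⟩ := hS A (hT hA)
  classical
  have hsub : T ⊆ hfin.toFinset.image (fun f => (a * f) • (N : Set G)) := by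
    intro B hB
    obtain ⟨b, rfl⟩ := hS B (hT hB)
    -- The infimum defining the distance need not be known to be attained, hence the slack of `1`.
    obtain ⟨r, ⟨x, hx, y, hy, rfl⟩, hr⟩ := exists_lt_of_csInf_lt
      (s := {r : ℝ | ∃ x ∈ a • (N : Set G), ∃ y ∈ b • (N : Set G), d x y = r})
      ⟨d a b, a, ⟨1, N.one_mem, by simp⟩, b, ⟨1, N.one_mem, by simp⟩, rfl⟩
      (lt_of_le_of_lt (hdist _ (hT hA) _ (hT hB)) (lt_add_one D))
    rw [mem_leftCoset_iff, SetLike.mem_coe] at hx hy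
    refine Finset.mem_image.2 ⟨x⁻¹ * y, ?_, ?_⟩
    · have h := hd.left_invariant x⁻¹ x y
      rw [inv_mul_cancel] at h
      simpa [h] using hr.le
    · rw [leftCoset_eq_iff]
      -- Modulo `N`, `a = x` and `y = b`, so `a * (x⁻¹ * y) = b`.
      have h1 : (a : G ⧸ N) = x := QuotientGroup.eq.2 hx
      have h2 : (b : G ⧸ N) = y := QuotientGroup.eq.2 hy
      rw [← QuotientGroup.eq]
      simp [h1, h2]
  exact (Finset.card_le_card hsub).trans Finset.card_image_le
end

section
/- Let G be a group equipped with a proper left-invariant metric d, and let K ≤ H ≤ G be subgroups. If K has bounded packing in H with respect to the restriction of d to H, and H has bounded packing in G with respect to d, then K has bounded packing in G with respect to d. -/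
/-!
Send a left coset `A = gK` to the left coset `A * H = gH`. Pairwise `D`-close cosets of `K` go to
pairwise `D`-close cosets of `H` (`cosetDist_mono`), so at most `n` cosets of `H` occur, where `n`
is the packing bound of `H` in `G`. The cosets of `K` lying over a fixed `gH` are contained in
`gH`, and left translation by `g⁻¹` carries them injectively, preserving distances, to cosets of `K`
in `H` (`cosetDist_preimage`); hence there are at most `m` of them, where `m` is the packing bound
of `K` in `H`. Altogether there are at most `m * n` cosets.
-/

open Pointwise

theorem IsProperLeftInvMetric.nonneg {G : Type*} [Group G] {d : G → G → ℝ}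
    (hd : IsProperLeftInvMetric G d) (x y : G) : 0 ≤ d x y := by
  have h := hd.triangle x y x
  rw [hd.self, hd.symm y x] at h
  linarith

/-- Enlarging nonempty sets decreases their distance. Nonemptiness matters: the infimum over an
empty set of distances is `0` by convention. -/
theorem cosetDist_mono {G : Type*} [Group G] {d : G → G → ℝ}
    (hd : IsProperLeftInvMetric G d) {A B A' B' : Set G} (hA : A.Nonempty) (hB : B.Nonempty)
    (hAA' : A ⊆ A') (hBB' : B ⊆ B') : cosetDist d A' B' ≤ cosetDist d A B := by
  obtain ⟨a, ha⟩ := hA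
  obtain ⟨b, hb⟩ := hB
  refine csInf_le_csInf ⟨0, ?_⟩ ⟨d a b, a, ha, b, hb, rfl⟩ ?_
  · rintro r ⟨x, -, y, -, rfl⟩
    exact hd.nonneg x y
  · rintro r ⟨x, hx, y, hy, rfl⟩
    exact ⟨x, hAA' hx, y, hBB' hy, rfl⟩

/-- For subsets `A`, `B` of a coset `gH`, translating by `g⁻¹` into `H` and restricting the metric
to `H` preserves the distance. -/
theorem cosetDist_preimage {G : Type*} [Group G] {d : G → G → ℝ}
    (hd : IsProperLeftInvMetric G d) (H : Subgroup G) (g : G) {A B : Set G}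
    (hA : A ⊆ g • (H : Set G)) (hB : B ⊆ g • (H : Set G)) :
    cosetDist (fun x y : H => d x y) {h : H | g * h ∈ A} {h : H | g * h ∈ B}
      = cosetDist d A B := by
  unfold cosetDist
  congr 1
  ext r
  constructor
  · rintro ⟨x, hx, y, hy, rfl⟩
    exact ⟨g * x, hx, g * y, hy, hd.left_invariant g x y⟩
  · rintro ⟨x, hx, y, hy, rfl⟩
    obtain ⟨u, hu, rfl⟩ := hA hx
    obtain ⟨v, hv, rfl⟩ := hB hy
    exact ⟨⟨u, hu⟩, hx, ⟨v, hv⟩, hy, (hd.left_invariant g u v).symm⟩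

theorem smul_subgroup_mul_of_le {G : Type*} [Group G] {K H : Subgroup G} (hKH : K ≤ H) (g : G) :
    (g • (K : Set G)) * (H : Set G) = g • (H : Set G) := by
  ext x
  constructor
  · rintro ⟨_, ⟨k, hk, rfl⟩, h, hh, rfl⟩
    exact ⟨k * h, H.mul_mem (hKH hk) hh, by simp [mul_assoc]⟩
  · rintro ⟨h, hh, rfl⟩
    exact ⟨g, ⟨1, K.one_mem, by simp⟩, h, hh, rfl⟩

theorem preimage_coset_eq_smul {G : Type*} [Group G] (K H : Subgroup G) (g : G) (h₀ : H) :
    {h : H | g * h ∈ (g * (h₀ : G)) • (K : Set G)} = h₀ • (K.subgroupOf H : Set H) := by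
  ext h
  simp [Set.mem_smul_set_iff_inv_smul_mem, Subgroup.mem_subgroupOf, mul_assoc]

/-- Bounded packing is transitive: if `K ≤ H ≤ G`, `K` has bounded packing in `H`
(with the restricted metric) and `H` has bounded packing in `G`, then `K` has
bounded packing in `G`. -/
theorem hasBoundedPacking_trans {G : Type*} [Group G] (d : G → G → ℝ)
    (hd : IsProperLeftInvMetric G d) (K H : Subgroup G) (hKH : K ≤ H)
    (hK : HasBoundedPacking (fun x y : H => d x y) (K.subgroupOf H))
    (hH : HasBoundedPacking d H) :
    HasBoundedPacking d K := by
  classical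
  intro D hD
  obtain ⟨n, hn⟩ := hH D hD
  obtain ⟨m, hm⟩ := hK D hD
  refine ⟨m * n, fun S hS hSD T hT => ?_⟩
  have hne : ∀ A ∈ S, A.Nonempty := by
    intro A hA
    obtain ⟨g, rfl⟩ := hS A hA
    exact ⟨g, 1, K.one_mem, by simp⟩
  have hsub : ∀ A : Set G, A ⊆ A * (H : Set G) := fun A x hx =>
    ⟨x, hx, 1, H.one_mem, by simp⟩
  have hcoset : ∀ A ∈ S, ∃ g : G, A * (H : Set G) = g • (H : Set G) := by
    intro A hA
    obtain ⟨g, rfl⟩ := hS A hA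
    exact ⟨g, smul_subgroup_mul_of_le hKH g⟩
  have himage : (T.image (fun A => A * (H : Set G))).card ≤ n := by
    refine hn ((fun A => A * (H : Set G)) '' S) ?_ ?_ _ ?_
    · rintro _ ⟨A, hA, rfl⟩
      exact hcoset A hA
    · rintro _ ⟨A, hA, rfl⟩ _ ⟨B, hB, rfl⟩
      exact (cosetDist_mono hd (hne A hA) (hne B hB) (hsub A) (hsub B)).trans (hSD A hA B hB)
    · rw [Finset.coe_image]
      exact Set.image_mono hT
  refine (Finset.card_le_mul_card_image T m ?_).trans (Nat.mul_le_mul_left m himage)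
  intro C hC
  obtain ⟨A₀, hA₀, rfl⟩ := Finset.mem_image.1 hC
  obtain ⟨g, hg⟩ := hcoset A₀ (hT hA₀)
  simp only [hg]
  set F := T.filter (fun A => A * (H : Set G) = g • (H : Set G)) with hF
  have hFS : ∀ A ∈ F, A ∈ S := fun A hA => hT (Finset.mem_filter.1 hA).1
  have hFsub : ∀ A ∈ F, A ⊆ g • (H : Set G) := fun A hA =>
    (hsub A).trans (Finset.mem_filter.1 hA).2.subset
  let ψ : Set G → Set H := fun A => {h : H | g * h ∈ A}
  have hψ : Set.InjOn ψ F := by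
    -- A subset `A` of `gH` is recovered from `ψ A` as its translate by `g`.
    have key : ∀ A ∈ F, ∀ B : Set G, ψ A = ψ B → A ⊆ B := by
      intro A hA B hAB x hx
      obtain ⟨u, hu, rfl⟩ := hFsub A hA hx
      have : (⟨u, hu⟩ : H) ∈ ψ A := hx
      rw [hAB] at this
      exact this
    intro A hA B hB hAB
    exact (key A hA B hAB).antisymm (key B hB A hAB.symm)
  rw [← Finset.card_image_of_injOn hψ]
  refine hm (ψ '' F) ?_ ?_ _ (Finset.coe_image (f := ψ) (s := F)).subset
  · rintro _ ⟨A, hA, rfl⟩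
    have hAg := hFsub A hA
    obtain ⟨g', rfl⟩ := hS A (hFS A hA)
    obtain ⟨u, hu, rfl⟩ := hAg (show g' ∈ g' • (K : Set G) from ⟨1, K.one_mem, by simp⟩)
    exact ⟨⟨u, hu⟩, preimage_coset_eq_smul K H g ⟨u, hu⟩⟩
  · rintro _ ⟨A, hA, rfl⟩ _ ⟨B, hB, rfl⟩
    exact (cosetDist_preimage hd H g (hFsub A hA) (hFsub B hB)).trans_le
      (hSD A (hFS A hA) B (hFS B hB))
end

section
/- Let π : G → Q be a surjective group homomorphism, let d_G be a proper left-invariant metric on G and d_Q a proper left-invariant metric on Q, and let Q₁ be a subgroup of Q. Then Q₁ has bounded packing in Q with respect to d_Q if and only if the preimage π⁻¹(Q₁) has bounded packing in G with respect to d_G. -/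
/-!
Bounded packing does not depend on the metric, only on the finite subsets of the group: `H` has
bounded packing iff for every finite `F` there is a bound on the number of left cosets of `H` that
pairwise contain points `x`, `y` with `x⁻¹ * y ∈ F` (`hasBoundedPacking_iff`). Indeed balls of a
proper metric are finite, and finite sets lie in balls.

In this form the theorem is a transfer along `π`. Preimage under `π` is a bijection from the left
cosets of `Q₁` to those of `Q₁.comap π` (`preimage_smul_coset`). If cosets in `G` are pairwise
`F`-close, then their images are pairwise `π '' F`-close; if cosets in `Q` are pairwise `F`-close,
then their preimages are pairwise `F'`-close for any finite set `F'` of lifts of `F`.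
-/

open Pointwise

/-- The metric-free form of bounded packing: for every finite `F`, the families of left cosets
of `H` any two of which contain points differing by an element of `F` have bounded size. -/
def FinitelyPacked {G : Type*} [Group G] (H : Subgroup G) : Prop :=
  ∀ F : Set G, F.Finite → ∃ n : ℕ, ∀ T : Finset (Set G),
    (∀ A ∈ T, ∃ g : G, A = g • (H : Set G)) →
    (∀ A ∈ T, ∀ B ∈ T, ∃ x ∈ A, ∃ y ∈ B, x⁻¹ * y ∈ F) → T.card ≤ n

theorem IsProperLeftInvMetric.eq_one_inv_mul {G : Type*} [Group G] {d : G → G → ℝ}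
    (hd : IsProperLeftInvMetric G d) (x y : G) : d x y = d 1 (x⁻¹ * y) := by
  have h := hd.left_invariant x⁻¹ x y
  rw [inv_mul_cancel] at h
  exact h.symm

/-- Bounded packing is independent of the metric: finite sets lie in balls, and balls are finite. -/
theorem hasBoundedPacking_iff {G : Type*} [Group G] {d : G → G → ℝ}
    (hd : IsProperLeftInvMetric G d) (H : Subgroup G) :
    HasBoundedPacking d H ↔ FinitelyPacked H := by
  constructor
  · intro h F hF
    obtain ⟨M, hM⟩ := (hF.image (d 1)).bddAbove
    obtain ⟨n, hn⟩ := h (max M 1) (by positivity)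
    refine ⟨n, fun T hT hclose => hn ↑T hT (fun A hA B hB => ?_) T subset_rfl⟩
    obtain ⟨x, hx, y, hy, hxy⟩ := hclose A hA B hB
    have hbdd : BddBelow {r : ℝ | ∃ x ∈ A, ∃ y ∈ B, d x y = r} :=
      ⟨0, by rintro _ ⟨x, _, y, _, rfl⟩; exact hd.nonneg x y⟩
    calc cosetDist d A B ≤ d x y := csInf_le hbdd ⟨x, hx, y, hy, rfl⟩
      _ = d 1 (x⁻¹ * y) := hd.eq_one_inv_mul x y
      _ ≤ M := hM ⟨_, hxy, rfl⟩
      _ ≤ max M 1 := le_max_left _ _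
  · intro h D hD
    -- A bound `D` on the infimum only yields points at distance less than `D + 1`.
    obtain ⟨n, hn⟩ := h _ (hd.proper (D + 1) (by linarith))
    refine ⟨n, fun S hS hdist T hTS => hn T (fun A hA => hS A (hTS hA)) fun A hA B hB => ?_⟩
    have hne : {r : ℝ | ∃ x ∈ A, ∃ y ∈ B, d x y = r}.Nonempty := by
      obtain ⟨a, rfl⟩ := hS A (hTS hA)
      obtain ⟨b, rfl⟩ := hS B (hTS hB)
      obtain ⟨x, hx⟩ : (a • (H : Set G)).Nonempty := (OneMemClass.coe_nonempty H).smul_set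
      obtain ⟨y, hy⟩ : (b • (H : Set G)).Nonempty := (OneMemClass.coe_nonempty H).smul_set
      exact ⟨_, x, hx, y, hy, rfl⟩
    have hlt : sInf {r : ℝ | ∃ x ∈ A, ∃ y ∈ B, d x y = r} < D + 1 :=
      (hdist A (hTS hA) B (hTS hB)).trans_lt (by linarith)
    obtain ⟨_, ⟨x, hx, y, hy, rfl⟩, hxy⟩ := exists_lt_of_csInf_lt hne hlt
    refine ⟨x, hx, y, hy, ?_⟩
    rw [hd.eq_one_inv_mul] at hxy
    exact hxy.le

/-- Preimages of left cosets of `Q₁` are left cosets of `Q₁.comap π`; for surjective `π` this is a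
bijection, with inverse the image under `π`. -/
theorem preimage_smul_coset {G Q : Type*} [Group G] [Group Q] (π : G →* Q) (Q₁ : Subgroup Q)
    (g : G) : π ⁻¹' (π g • (Q₁ : Set Q)) = g • (Q₁.comap π : Set G) := by
  ext x
  simp [Set.mem_smul_set_iff_inv_smul_mem]

theorem finitelyPacked_comap_iff {G Q : Type*} [Group G] [Group Q]
    (π : G →* Q) (hπ : Function.Surjective π) (Q₁ : Subgroup Q) :
    FinitelyPacked Q₁ ↔ FinitelyPacked (Q₁.comap π) := by
  classical
  constructor
  · intro h F hF
    obtain ⟨n, hn⟩ := h (π '' F) (hF.image π)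
    refine ⟨n, fun T hT hclose => ?_⟩
    have himage : ∀ g : G, π '' (g • (Q₁.comap π : Set G)) = π g • (Q₁ : Set Q) := fun g => by
      rw [← preimage_smul_coset, Set.image_preimage_eq _ hπ]
    have hinj : Set.InjOn (fun A => π '' A) (T : Set (Set G)) := by
      intro A hA B hB hAB
      obtain ⟨a, rfl⟩ := hT A hA
      obtain ⟨b, rfl⟩ := hT B hB
      simp only [himage] at hAB
      rw [← preimage_smul_coset, ← preimage_smul_coset, hAB]
    rw [← Finset.card_image_of_injOn hinj]
    apply hn
    · simp only [Finset.forall_mem_image]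
      intro A hA
      obtain ⟨a, rfl⟩ := hT A hA
      exact ⟨π a, himage a⟩
    · simp only [Finset.forall_mem_image]
      intro A hA B hB
      obtain ⟨x, hx, y, hy, hxy⟩ := hclose A hA B hB
      exact ⟨π x, ⟨x, hx, rfl⟩, π y, ⟨y, hy, rfl⟩, x⁻¹ * y, hxy, by simp⟩
  · intro h F hF
    obtain ⟨n, hn⟩ := h (Function.surjInv hπ '' F) (hF.image _)
    refine ⟨n, fun T hT hclose => ?_⟩
    rw [← Finset.card_image_of_injective T hπ.preimage_injective]
    apply hn
    · simp only [Finset.forall_mem_image]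
      intro A hA
      obtain ⟨q, rfl⟩ := hT A hA
      obtain ⟨g, rfl⟩ := hπ q
      exact ⟨g, preimage_smul_coset π Q₁ g⟩
    · simp only [Finset.forall_mem_image]
      intro A hA B hB
      obtain ⟨x, hx, y, hy, hxy⟩ := hclose A hA B hB
      obtain ⟨x, rfl⟩ := hπ x
      -- The lift of `y` is chosen to differ from `x` by the chosen lift of `(π x)⁻¹ * y`.
      refine ⟨x, hx, x * Function.surjInv hπ ((π x)⁻¹ * y), ?_, (π x)⁻¹ * y, hxy, by simp⟩
      simpa [Function.surjInv_eq hπ] using hy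

/-- For a surjection `π : G → Q` and a subgroup `Q₁ ≤ Q`, `Q₁` has bounded
packing in `Q` iff the preimage `π⁻¹(Q₁)` has bounded packing in `G`. -/
theorem comap_hasBoundedPacking_iff {G Q : Type*} [Group G] [Group Q]
    (π : G →* Q) (hπ : Function.Surjective π)
    (dG : G → G → ℝ) (hdG : IsProperLeftInvMetric G dG)
    (dQ : Q → Q → ℝ) (hdQ : IsProperLeftInvMetric Q dQ)
    (Q₁ : Subgroup Q) :
    HasBoundedPacking dQ Q₁ ↔ HasBoundedPacking dG (Q₁.comap π) := by
  rw [hasBoundedPacking_iff hdQ, hasBoundedPacking_iff hdG]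
  exact finitelyPacked_comap_iff π hπ Q₁
end

section
/- Let G be a virtually nilpotent group (G has a nilpotent subgroup of finite index) equipped with a proper left-invariant metric d. Then every subgroup of G has bounded packing in G with respect to d. -/
/-!
Closeness of cosets is first freed from the metric: two cosets `aH`, `bH` are at distance at most
`D` only if `a⁻¹ * b ∈ H F H`, where `F` is the ball of radius `D + 1`, a finite set. This leads to
the purely algebraic property `HasDoubleCosetPacking`.

That property passes down from `K` to any subgroup `H` normal in `K`
(`HasDoubleCosetPacking.of_normal`): pairwise close cosets of `H` meet boundedly many cosets of `K`,
and inside one coset of `K` normality of `H` turns `H F H` into `F H`, so at most `|F|` cosets of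
`H` occur there. Hence it holds for all subnormal subgroups. It also passes up from a subgroup of
finite index (`HasDoubleCosetPacking.of_finite_reps`).

In a nilpotent group every subgroup is subnormal. If `M` is a normal nilpotent subgroup of finite
index in `G`, then `H ⊓ M` is subnormal in `M`, hence in `G`, and it has finite index in `H`.
-/


open Pointwise

/-- Metric-free bounded packing: for each finite `F`, there is a uniform bound on the number of
distinct cosets `aH` whose representatives satisfy `a⁻¹ * b ∈ H F H` pairwise. The cosets are
recorded by a finite set `T` of representatives. -/
def HasDoubleCosetPacking {G : Type*} [Group G] (H : Subgroup G) : Prop :=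
  ∀ F : Finset G, ∃ n : ℕ, ∀ T : Finset G,
    (∀ a ∈ T, ∀ b ∈ T, ∃ h ∈ H, ∃ f ∈ F, ∃ k ∈ H, a⁻¹ * b = h * f * k) →
    Set.InjOn (fun a : G => (a : G ⧸ H)) (T : Set G) → T.card ≤ n

lemma hasDoubleCosetPacking_top {G : Type*} [Group G] :
    HasDoubleCosetPacking (⊤ : Subgroup G) := by
  refine fun F => ⟨1, fun T _ hinj => Finset.card_le_one.2 fun a ha b hb => hinj ha hb ?_⟩
  simp [QuotientGroup.eq]

lemma HasDoubleCosetPacking.of_normal {G : Type*} [Group G] {H K : Subgroup G} (hHK : H ≤ K)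
    (hN : (H.subgroupOf K).Normal) (hK : HasDoubleCosetPacking K) :
    HasDoubleCosetPacking H := by
  classical
  intro F
  obtain ⟨n, hn⟩ := hK F
  refine ⟨F.card * n, fun T hT hinj => ?_⟩
  have hconj : ∀ f ∈ K, ∀ h ∈ H, f⁻¹ * h * f ∈ H := by
    intro f hf h hh
    have := hN.conj_mem ⟨h, hHK hh⟩ hh ⟨f⁻¹, K.inv_mem hf⟩
    simpa [Subgroup.mem_subgroupOf] using this
  let p : G → G ⧸ K := fun a => (a : G ⧸ K)
  have himage : (T.image p).card ≤ n := by
    obtain ⟨T', hT'T, hinj', himg⟩ :=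
      Finset.exists_subset_injOn_image_eq_of_surjOn (f := p) (T : Set G) (T.image p)
        (by rw [Finset.coe_image]; exact Set.surjOn_image p T)
    rw [← himg, Finset.card_image_of_injOn hinj']
    refine hn T' (fun a ha b hb => ?_) hinj'
    obtain ⟨h, hh, f, hf, k, hk, e⟩ := hT a (hT'T ha) b (hT'T hb)
    exact ⟨h, hHK hh, f, hf, k, hHK hk, e⟩
  refine (Finset.card_le_mul_card_image (f := p) T F.card fun c hc => ?_).trans
    (Nat.mul_le_mul_left _ himage)
  obtain ⟨a₀, ha₀, rfl⟩ := Finset.mem_image.1 hc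
  -- An element `a` of the fibre is sent to some `f ∈ F` with `a₀⁻¹ * a ∈ H f H`.
  choose! φ hφ using fun a (ha : a ∈ T) =>
    (by obtain ⟨h, hh, f, hf, k, hk, e⟩ := hT a₀ ha₀ a ha
        exact ⟨f, hf, h, hh, k, hk, e⟩ :
      ∃ f, f ∈ F ∧ ∃ h ∈ H, ∃ k ∈ H, a₀⁻¹ * a = h * f * k)
  refine Finset.card_le_card_of_injOn φ (fun a ha => ?_) (fun a ha b hb hab => ?_)
  · exact (hφ a (Finset.mem_filter.1 ha).1).1
  · obtain ⟨haT, hac⟩ := Finset.mem_filter.1 ha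
    obtain ⟨hbT, -⟩ := Finset.mem_filter.1 hb
    refine hinj haT hbT (QuotientGroup.eq.2 ?_)
    obtain ⟨-, h, hh, k, hk, e⟩ := hφ a haT
    obtain ⟨-, h', hh', k', hk', e'⟩ := hφ b hbT
    rw [← hab] at e'
    have hfK : φ a ∈ K := by
      have h1 : a₀⁻¹ * a ∈ K := QuotientGroup.eq.1 hac.symm
      have h2 : φ a = h⁻¹ * (a₀⁻¹ * a) * k⁻¹ := by rw [e]; group
      rw [h2]
      exact K.mul_mem (K.mul_mem (K.inv_mem (hHK hh)) h1) (K.inv_mem (hHK hk))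
    have h3 : a⁻¹ * b = k⁻¹ * ((φ a)⁻¹ * (h⁻¹ * h') * φ a) * k' := by
      calc a⁻¹ * b = (a₀⁻¹ * a)⁻¹ * (a₀⁻¹ * b) := by group
        _ = _ := by rw [e, e']; group
    rw [h3]
    exact H.mul_mem (H.mul_mem (H.inv_mem hk)
      (hconj _ hfK _ (H.mul_mem (H.inv_mem hh) hh'))) hk'

lemma Subgroup.IsSubnormal.hasDoubleCosetPacking {G : Type*} [Group G] {H : Subgroup G}
    (hH : H.IsSubnormal) : HasDoubleCosetPacking H := by
  induction hH with
  | top => exact hasDoubleCosetPacking_top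
  | step H K hle _ hN ih => exact ih.of_normal hle hN

/-- If `L ≤ H` and a finite set `R` meets every coset `hL` with `h ∈ H`, then packing for `L`
implies packing for `H`, because `H F H ⊆ L (R⁻¹ F R) L`. -/
lemma HasDoubleCosetPacking.of_finite_reps {G : Type*} [Group G] {L H : Subgroup G} (hLH : L ≤ H)
    (R : Finset G) (hR : ∀ h ∈ H, ∃ r ∈ R, r⁻¹ * h ∈ L) (hL : HasDoubleCosetPacking L) :
    HasDoubleCosetPacking H := by
  classical
  intro F
  obtain ⟨n, hn⟩ := hL ((R ×ˢ F ×ˢ R).image fun x => x.1⁻¹ * x.2.1 * x.2.2)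
  refine ⟨n, fun T hT hinj => hn T (fun a ha b hb => ?_) fun a ha b hb hab => ?_⟩
  · obtain ⟨h, hh, f, hf, k, hk, e⟩ := hT a ha b hb
    obtain ⟨r, hr, hrh⟩ := hR h⁻¹ (H.inv_mem hh)
    obtain ⟨s, hs, hsk⟩ := hR k hk
    refine ⟨(r⁻¹ * h⁻¹)⁻¹, L.inv_mem hrh, r⁻¹ * f * s, ?_, s⁻¹ * k, hsk, ?_⟩
    · exact Finset.mem_image.2 ⟨(r, f, s), by simp [hr, hf, hs], rfl⟩
    · rw [e]; group
  · exact hinj ha hb (QuotientGroup.eq.2 (hLH (QuotientGroup.eq.1 hab)))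

/-- By induction on the nilpotency class: `H` is normalized by the centre `Z`, hence normal in
`H Z`, which is the preimage of a subgroup of `G ⧸ Z`. -/
lemma Group.IsNilpotent.isSubnormal {G : Type*} [Group G] (hG : Group.IsNilpotent G)
    (H : Subgroup G) : H.IsSubnormal := by
  revert H
  refine Group.nilpotent_center_quotient_ind
    (P := fun G _ _ => ∀ H : Subgroup G, H.IsSubnormal) G ?_ ?_
  · intro G _ _ H
    rw [Subsingleton.elim H ⊤]
    exact .top
  · intro G _ _ ih H
    have hs := (ih (H.map (QuotientGroup.mk' (Subgroup.center G)))).comap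
      (QuotientGroup.mk' (Subgroup.center G))
    rw [Subgroup.comap_map_eq, QuotientGroup.ker_mk'] at hs
    refine .step H _ le_sup_left hs ?_
    rw [Subgroup.normal_subgroupOf_iff_le_normalizer le_sup_left]
    exact sup_le Subgroup.le_normalizer (Subgroup.center_le_normalizer _)

lemma hasDoubleCosetPacking_of_virtually_nilpotent {G : Type*} [Group G]
    (hvn : ∃ N : Subgroup G, Group.IsNilpotent N ∧ N.FiniteIndex) (H : Subgroup G) :
    HasDoubleCosetPacking H := by
  classical
  obtain ⟨N, hN, hfin⟩ := hvn
  let M := N.normalCore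
  have hM : Group.IsNilpotent M :=
    (Group.isNilpotent_congr (Subgroup.subgroupOfEquivOfLe N.normalCore_le)).1 inferInstance
  have hsub : (H ⊓ M).IsSubnormal :=
    Subgroup.IsSubnormal.trans inf_le_right (hM.isSubnormal _)
      (Subgroup.Normal.isSubnormal N.normalCore_normal)
  have hMfin : M.FiniteIndex := inferInstance
  have : Fintype (H ⧸ M.subgroupOf H) := Fintype.ofFinite _
  refine HasDoubleCosetPacking.of_finite_reps inf_le_left
    (Finset.univ.image fun q : H ⧸ M.subgroupOf H => (q.out : G)) (fun h hh => ?_)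
    hsub.hasDoubleCosetPacking
  let q : H ⧸ M.subgroupOf H := ((⟨h, hh⟩ : H) : H ⧸ M.subgroupOf H)
  refine ⟨(q.out : G), Finset.mem_image_of_mem _ (Finset.mem_univ q), ?_⟩
  have h1 : (q.out)⁻¹ * (⟨h, hh⟩ : H) ∈ M.subgroupOf H :=
    QuotientGroup.eq.1 (QuotientGroup.out_eq' q)
  exact ⟨H.mul_mem (H.inv_mem q.out.2) hh, h1⟩

/-- Every subgroup of a virtually nilpotent group has bounded packing. -/
theorem virtually_nilpotent_hasBoundedPacking {G : Type*} [Group G]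
    (d : G → G → ℝ) (hd : IsProperLeftInvMetric G d)
    (hvn : ∃ N : Subgroup G, Group.IsNilpotent N ∧ N.FiniteIndex)
    (H : Subgroup G) :
    HasBoundedPacking d H := by
  classical
  intro D hD
  -- The infimum defining `cosetDist` need not be attained a priori; radius `D + 1` leaves room.
  obtain ⟨n, hn⟩ := hasDoubleCosetPacking_of_virtually_nilpotent hvn H
    (hd.proper (D + 1) (by linarith)).toFinset
  refine ⟨n, fun S hS hdist T hTS => ?_⟩
  choose! g hg using hS
  have hginj : Set.InjOn g (T : Set (Set G)) := by
    intro A hA B hB hAB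
    rw [hg A (hTS hA), hg B (hTS hB), hAB]
  rw [← Finset.card_image_of_injOn hginj]
  refine hn _ (fun a ha b hb => ?_) (fun a ha b hb hab => ?_)
  · obtain ⟨A, hA, rfl⟩ := Finset.mem_image.1 ha
    obtain ⟨B, hB, rfl⟩ := Finset.mem_image.1 hb
    have hlt : cosetDist d A B < D + 1 :=
      (hdist A (hTS hA) B (hTS hB)).trans_lt (by linarith)
    have hmem : ∀ A ∈ T, g A ∈ A := fun A hA =>
      (hg A (hTS hA)).ge ⟨1, H.one_mem, mul_one _⟩
    have hne : {r : ℝ | ∃ x ∈ A, ∃ y ∈ B, d x y = r}.Nonempty :=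
      ⟨_, g A, hmem A hA, g B, hmem B hB, rfl⟩
    obtain ⟨_, ⟨x, hx, y, hy, rfl⟩, hxy⟩ := exists_lt_of_csInf_lt hne hlt
    rw [hg A (hTS hA)] at hx
    rw [hg B (hTS hB)] at hy
    obtain ⟨h, hh, rfl⟩ := hx
    obtain ⟨k, hk, rfl⟩ := hy
    refine ⟨h, hh, (g A * h)⁻¹ * (g B * k), ?_, k⁻¹, H.inv_mem hk, by group⟩
    rw [Set.Finite.mem_toFinset, Set.mem_ofPred_eq]
    have := hd.left_invariant (g A * h) 1 ((g A * h)⁻¹ * (g B * k))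
    rw [mul_one, mul_inv_cancel_left] at this
    rw [← this]
    exact hxy.le
  · obtain ⟨A, hA, rfl⟩ := Finset.mem_image.1 ha
    obtain ⟨B, hB, rfl⟩ := Finset.mem_image.1 hb
    have : A = B := by
      rw [hg A (hTS hA), hg B (hTS hB)]
      exact (leftCoset_eq_iff H).2 (QuotientGroup.eq.1 hab)
    rw [this]
end

section
/- Let G be a group equipped with a proper left-invariant metric d, and let {H_α}_{α ∈ I} be any (possibly infinite) family of subgroups of G such that each H_α has bounded packing in G with respect to d. Then the intersection K = ⋂_{α ∈ I} H_α has bounded packing in G with respect to d. -/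
/-!
Write `K` for the intersection and fix `D`. By properness the ball of radius `D + 1` about `1` is
finite, so there are finitely many `H α` such that every element of the ball outside `K` is missed
by one of them. If `x K ≠ y K` with `d x y < D + 1`, then `x⁻¹ y` lies in the ball but not in `K`,
so `x H α ≠ y H α` for one of these finitely many `α`. Hence on a family of cosets of `K` which are
pairwise at distance at most `D`, the map `A ↦ (A H α)_α` into a finite product is injective. Each
coordinate takes values in a family of cosets of `H α` that are again pairwise close, so it takes a
number of values bounded by the packing constant of `H α`, and the product of these constants
bounds the size of the family.
-/

open Pointwise

theorem cosetDist_le {G : Type*} [Group G] {d : G → G → ℝ}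
    (hd : IsProperLeftInvMetric G d) {A B : Set G} {x y : G} (hx : x ∈ A) (hy : y ∈ B) :
    cosetDist d A B ≤ d x y :=
  csInf_le ⟨0, by rintro _ ⟨x, -, y, -, rfl⟩; exact hd.nonneg x y⟩ ⟨x, hx, y, hy, rfl⟩

theorem exists_dist_lt {G : Type*} [Group G] {d : G → G → ℝ} {A B : Set G} (hA : A.Nonempty)
    (hB : B.Nonempty) {D : ℝ} (h : cosetDist d A B < D) : ∃ x ∈ A, ∃ y ∈ B, d x y < D := by
  obtain ⟨a, ha⟩ := hA
  obtain ⟨b, hb⟩ := hB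
  obtain ⟨_, ⟨x, hx, y, hy, rfl⟩, hlt⟩ :=
    exists_lt_of_csInf_lt (s := {r : ℝ | ∃ x ∈ A, ∃ y ∈ B, d x y = r}) ⟨_, a, ha, b, hb, rfl⟩ h
  exact ⟨x, hx, y, hy, hlt⟩

theorem smul_coe_mul_coe {G : Type*} [Group G] {K H : Subgroup G} (h : K ≤ H) (g : G) :
    g • (K : Set G) * (H : Set G) = g • (H : Set G) := by
  rw [smul_mul_assoc]
  congr 1
  ext x
  constructor
  · rintro ⟨k, hk, y, hy, rfl⟩
    exact H.mul_mem (h hk) hy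
  · intro hx
    exact ⟨1, K.one_mem, x, hx, one_mul x⟩

theorem smul_coe_eq_iff {G : Type*} [Group G] {K : Subgroup G} {x y : G} :
    x • (K : Set G) = y • (K : Set G) ↔ x⁻¹ * y ∈ K := by
  rw [leftCoset_eq_iff]

theorem eq_smul_of_mem {G : Type*} [Group G] {K : Subgroup G} {x : G} {A : Set G}
    (hA : ∃ g : G, A = g • (K : Set G)) (hx : x ∈ A) : A = x • (K : Set G) := by
  obtain ⟨g, rfl⟩ := hA
  rw [smul_coe_eq_iff]
  obtain ⟨k, hk, rfl⟩ := hx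
  simpa using hk

/-- An arbitrary intersection of subgroups, each with bounded packing, has
bounded packing. -/
theorem iInf_hasBoundedPacking {G : Type*} [Group G] (d : G → G → ℝ)
    (hd : IsProperLeftInvMetric G d) {I : Type*} (H : I → Subgroup G)
    (hH : ∀ α : I, HasBoundedPacking d (H α)) :
    HasBoundedPacking d (⨅ α : I, H α) := by
  classical
  intro D hD
  set K : Subgroup G := ⨅ α : I, H α
  have hle : ∀ α, K ≤ H α := fun α => iInf_le H α
  -- The elements of the ball which have to be separated from `K`.
  let P : Type _ := {b : G // d 1 b ≤ D + 1 ∧ b ∉ K}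
  have : Finite P :=
    Set.Finite.subset (hd.proper (D + 1) (by linarith)) (fun b hb => hb.1)
  have : Fintype P := Fintype.ofFinite P
  have hc : ∀ p : P, ∃ α, p.1 ∉ H α := by
    intro p
    by_contra! h
    exact p.2.2 (Subgroup.mem_iInf.mpr h)
  choose c hc using hc
  choose n hn using fun α => hH α (D + 1) (by linarith)
  refine ⟨∏ p : P, n (c p), fun S hS hSD T hT => ?_⟩
  have hne : ∀ A ∈ S, A.Nonempty := by
    intro A hA
    obtain ⟨g, rfl⟩ := hS A hA
    exact ⟨g, 1, K.one_mem, mul_one g⟩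
  have hclose : ∀ A ∈ S, ∀ B ∈ S, ∃ x ∈ A, ∃ y ∈ B, d x y < D + 1 := fun A hA B hB =>
    exists_dist_lt (hne A hA) (hne B hB) (by linarith [hSD A hA B hB])
  let V : P → Finset (Set G) := fun p => T.image (fun A => A * (H (c p) : Set G))
  have hV : ∀ p, (V p).card ≤ n (c p) := by
    intro p
    refine hn (c p) (V p) ?_ ?_ (V p) subset_rfl
    · intro A hA
      obtain ⟨A, hAT, rfl⟩ := Finset.mem_image.mp hA
      obtain ⟨g, rfl⟩ := hS A (hT hAT)
      exact ⟨g, smul_coe_mul_coe (hle _) g⟩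
    · intro A hA B hB
      obtain ⟨A, hAT, rfl⟩ := Finset.mem_image.mp hA
      obtain ⟨B, hBT, rfl⟩ := Finset.mem_image.mp hB
      obtain ⟨x, hx, y, hy, hxy⟩ := hclose A (hT hAT) B (hT hBT)
      exact (cosetDist_le hd (Set.mem_mul.mpr ⟨x, hx, 1, (H (c p)).one_mem, mul_one x⟩)
        (Set.mem_mul.mpr ⟨y, hy, 1, (H (c p)).one_mem, mul_one y⟩)).trans hxy.le
  calc T.card ≤ (Fintype.piFinset V).card := by
        refine Finset.card_le_card_of_injOn (fun A p => A * (H (c p) : Set G)) ?_ ?_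
        · intro A hA
          exact Fintype.mem_piFinset.mpr fun p => Finset.mem_image_of_mem _ hA
        · intro A hA B hB hAB
          obtain ⟨x, hx, y, hy, hxy⟩ := hclose A (hT hA) B (hT hB)
          rw [eq_smul_of_mem (hS A (hT hA)) hx, eq_smul_of_mem (hS B (hT hB)) hy] at hAB ⊢
          rw [smul_coe_eq_iff]
          by_contra hb
          have hball : d 1 (x⁻¹ * y) ≤ D + 1 := by
            rw [← hd.left_invariant x, mul_one, mul_inv_cancel_left]
            exact hxy.le
          let p : P := ⟨x⁻¹ * y, hball, hb⟩
          have hp := congrFun hAB p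
          simp only [smul_coe_mul_coe (hle _)] at hp
          exact hc p (smul_coe_eq_iff.mp hp)
    _ = ∏ p : P, (V p).card := Fintype.card_piFinset V
    _ ≤ ∏ p : P, n (c p) := Finset.prod_le_prod' fun p _ => hV p
end

section
/- Let G be a group equipped with a proper left-invariant metric d, and let H be a separable subgroup of G, i.e., for every g ∈ G with g ∉ H there is a finite-index subgroup K of G with H ≤ K and g ∉ K. Then H has bounded packing in G with respect to d. -/
/-!
Fix `D > 0`. By properness only finitely many `g ∉ H` satisfy `d 1 g ≤ D + 1`, so intersecting the
finite-index subgroups that separate them from `H` gives a finite-index subgroup `K ≥ H` whose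
elements of length at most `D + 1` all lie in `H` (`exists_finiteIndex_short_mem`). If two left
cosets of `H` at distance at most `D` lie in the same left coset of `K`, they contain points `x`, `y`
with `d x y ≤ D + 1` and `x⁻¹ * y ∈ K`, hence `x⁻¹ * y ∈ H` and the two cosets are equal. So a family
of pairwise `D`-close left cosets of `H` injects into `G ⧸ K`, and `n = K.index` works.
-/

open Pointwise

/-- A separable subgroup is separated from all short elements outside it by one finite-index
subgroup. -/
lemma exists_finiteIndex_short_mem {G : Type*} [Group G] (d : G → G → ℝ)
    (hd : IsProperLeftInvMetric G d) (H : Subgroup G)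
    (hsep : ∀ g : G, g ∉ H → ∃ K : Subgroup G, K.FiniteIndex ∧ H ≤ K ∧ g ∉ K)
    (r : ℝ) (hr : 0 < r) :
    ∃ K : Subgroup G, K.FiniteIndex ∧ H ≤ K ∧ ∀ g ∈ K, d 1 g ≤ r → g ∈ H := by
  choose! L hL using hsep
  have hfin : {g : G | d 1 g ≤ r ∧ g ∉ H}.Finite :=
    (hd.proper r hr).subset fun g hg => hg.1
  have : Finite {g : G // d 1 g ≤ r ∧ g ∉ H} := hfin.to_subtype
  refine ⟨⨅ g : {g : G // d 1 g ≤ r ∧ g ∉ H}, L g,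
    Subgroup.finiteIndex_iInf fun g => (hL g g.2.2).1,
    le_iInf fun g => (hL g g.2.2).2.1, fun g hg hgr => ?_⟩
  by_contra hgH
  exact (hL g hgH).2.2 (Subgroup.mem_iInf.1 hg ⟨g, hgr, hgH⟩)

/-- Two left cosets at distance at most `D` need not attain that distance, but they have
representatives at distance less than `D + 1`. -/
lemma exists_mem_dist_lt {G : Type*} [Group G] (d : G → G → ℝ) (H : Subgroup G) (D : ℝ) (a b : G)
    (h : cosetDist d (a • (H : Set G)) (b • (H : Set G)) ≤ D) :
    ∃ x ∈ H, ∃ y ∈ H, d (a * x) (b * y) < D + 1 := by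
  have hne : {r : ℝ | ∃ x ∈ a • (H : Set G), ∃ y ∈ b • (H : Set G), d x y = r}.Nonempty :=
    ⟨_, a * 1, ⟨1, H.one_mem, rfl⟩, b * 1, ⟨1, H.one_mem, rfl⟩, rfl⟩
  obtain ⟨r, ⟨_, ⟨x, hx, rfl⟩, _, ⟨y, hy, rfl⟩, rfl⟩, hr⟩ :=
    exists_lt_of_csInf_lt hne (lt_of_le_of_lt h (lt_add_one D))
  exact ⟨x, hx, y, hy, hr⟩

/-- Every separable subgroup has bounded packing. -/
theorem separable_hasBoundedPacking {G : Type*} [Group G] (d : G → G → ℝ)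
    (hd : IsProperLeftInvMetric G d) (H : Subgroup G)
    (hsep : ∀ g : G, g ∉ H → ∃ K : Subgroup G, K.FiniteIndex ∧ H ≤ K ∧ g ∉ K) :
    HasBoundedPacking d H := by
  intro D hD
  obtain ⟨K, hKfin, hHK, hK⟩ := exists_finiteIndex_short_mem d hd H hsep (D + 1) (by linarith)
  refine ⟨K.index, fun S hS hclose T hT => ?_⟩
  choose! rep hrep using hS
  have : Fintype (G ⧸ K) := Fintype.ofFinite _
  rw [Subgroup.index_eq_card, Nat.card_eq_fintype_card, ← Finset.card_univ]
  refine Finset.card_le_card_of_injOn (fun A => (rep A : G ⧸ K)) (fun _ _ => Finset.mem_univ _) ?_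
  intro A hA B hB hAB
  have hAB' : (rep A)⁻¹ * rep B ∈ K := QuotientGroup.eq.1 hAB
  have hdist := hclose A (hT hA) B (hT hB)
  rw [hrep A (hT hA), hrep B (hT hB)] at hdist
  obtain ⟨x, hx, y, hy, hxy⟩ := exists_mem_dist_lt d H D _ _ hdist
  have hshort : d 1 ((rep A * x)⁻¹ * (rep B * y)) ≤ D + 1 := by
    have h := hd.left_invariant (rep A * x)⁻¹ (rep A * x) (rep B * y)
    rw [inv_mul_cancel] at h
    exact h.trans_le hxy.le
  have heq : (rep A * x)⁻¹ * (rep B * y) = x⁻¹ * ((rep A)⁻¹ * rep B) * y := by group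
  rw [heq] at hshort
  have hmem := hK _ (K.mul_mem (K.mul_mem (K.inv_mem (hHK hx)) hAB') (hHK hy)) hshort
  rw [H.mul_mem_cancel_right hy, H.mul_mem_cancel_left (H.inv_mem hx)] at hmem
  rw [hrep A (hT hA), hrep B (hT hB)]
  exact (leftCoset_eq_iff H).2 hmem
end

section
/- Let G be a polycyclic group (i.e., G is solvable and every subgroup of G is finitely generated) equipped with a proper left-invariant metric d. Then every subgroup of G has bounded packing in G with respect to d. -/
/-!
The argument is the combination of two facts.

*Separable subgroups have bounded packing.* If `g H` and `g' H` are at distance at most `D`, then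
`g⁻¹ g' ∈ H b H` for some `b` in the finite ball `B` of radius `D + 1`. If `H` is separable, there
is a finite-index subgroup `K ≥ H` that contains no element of `B \ H`. For distinct cosets `b ∉ H`,
hence `b ∉ K` and `g⁻¹ g' ∉ K`; so a family of pairwise close cosets embeds in `G ⧸ K`.

*Every subgroup of a polycyclic group is separable* (Mal'cev). Given `g ∉ H`, enlarge `H` by Zorn's
lemma to a subgroup `M` maximal among those avoiding `g`; it is enough that `M` has finite index.
After dividing by the normal core, `M` contains no nontrivial normal subgroup and `G` must be shown
to be finite. Otherwise `G` has an infinite abelian normal subgroup `A`: the last infinite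
term of the derived series has finite commutator subgroup, hence a center of finite index, and this
center serves as `A`. For `m ≥ 1` the subgroup `A ^ m` is normal and nontrivial, so it is not
contained in `M`, and maximality gives `g ∈ M A ^ m`. Writing `g = h a` with `h ∈ M` and `a ∈ A`,
it follows that `a ∈ (M ∩ A) A ^ m` for every `m ≥ 1`. Since `A / (M ∩ A)` is a finitely generated
abelian group, hence residually finite, this forces `a ∈ M`, a contradiction.
-/

open Pointwise

/-- Zorn's lemma for the subgroups that contain `H` and avoid `g`. -/
lemma exists_maximal_avoiding {G : Type*} [Group G] (H : Subgroup G) (g : G) (hg : g ∉ H) :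
    ∃ M : Subgroup G, H ≤ M ∧ g ∉ M ∧ ∀ K : Subgroup G, M ≤ K → g ∉ K → K ≤ M := by
  obtain ⟨M, hHM, hM⟩ := zorn_le_nonempty₀ {K : Subgroup G | g ∉ K}
    (fun c hc hchain y hy => ⟨sSup c, fun hmem => by
      obtain ⟨s, hs, hgs⟩ := (Subgroup.mem_sSup_of_directedOn ⟨y, hy⟩ hchain.directedOn).1 hmem
      exact hc hs hgs, fun z hz => le_sSup hz⟩) H hg
  exact ⟨M, hHM, hM.prop, fun K hMK hK => hM.le_of_ge hK hMK⟩

/-- Finitely generated abelian groups are residually finite, in relative form. In the quotient by a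
maximal subgroup `K ≥ B` avoiding `a`, every nontrivial subgroup contains the image of `a`, so this
quotient is a torsion group and therefore finite; its order is the required `m`. -/
lemma exists_pow_separating {A : Type*} [CommGroup A] [Group.FG A] (B : Subgroup A) (a : A)
    (ha : a ∉ B) : ∃ m : ℕ, 0 < m ∧ ∀ b ∈ B, ∀ x : A, a ≠ b * x ^ m := by
  obtain ⟨K, hBK, haK, hmax⟩ := exists_maximal_avoiding B a ha
  have key : ∀ x : A, x ∉ K → ∃ k ∈ K, ∃ i : ℤ, k * x ^ i = a := by
    intro x hx
    have hmem : a ∈ K ⊔ Subgroup.zpowers x := by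
      by_contra hn
      exact hx (hmax _ le_sup_left hn (Subgroup.mem_sup_right (Subgroup.mem_zpowers x)))
    obtain ⟨k, hk, z, ⟨i, rfl⟩, h⟩ := Subgroup.mem_sup.1 hmem
    exact ⟨k, hk, i, h⟩
  have tors : ∀ x : A, ∃ n : ℤ, n ≠ 0 ∧ x ^ n ∈ K := by
    intro x
    by_contra! hcon
    have hx : x ∉ K := fun h => hcon 1 one_ne_zero (by simpa using h)
    obtain ⟨k, hk, i, hi⟩ := key x hx
    have hi0 : i ≠ 0 := by
      rintro rfl
      exact haK (by rw [← hi]; simpa using hk)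
    -- An element of infinite order modulo `K` would give `a ≡ x ^ i` and `a ≡ x ^ (2 i j)`, although
    -- `i ≠ 2 i j`.
    obtain ⟨k', hk', j, hj⟩ := key (x ^ (2 * i)) (hcon _ (by omega))
    refine hcon (i - 2 * i * j) ?_ ?_
    · intro h0
      have h1 : i * (1 - 2 * j) = 0 := by linarith
      rcases mul_eq_zero.1 h1 with h | h <;> omega
    · have h1 : x ^ (i - 2 * i * j) = k⁻¹ * k' := by
        rw [zpow_sub, zpow_mul, mul_inv_eq_iff_eq_mul, mul_assoc, hj, ← hi, inv_mul_cancel_left]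
      rw [h1]
      exact K.mul_mem (K.inv_mem hk) hk'
  have hT : IsMulTorsion (A ⧸ K) := by
    intro q
    obtain ⟨x, rfl⟩ := QuotientGroup.mk_surjective q
    obtain ⟨n, hn, hxn⟩ := tors x
    rw [isOfFinOrder_iff_zpow_eq_one]
    exact ⟨n, hn, by rw [← QuotientGroup.mk_zpow]; exact (QuotientGroup.eq_one_iff _).2 hxn⟩
  have hfin : Finite (A ⧸ K) := CommGroup.finite_of_fg_isMulTorsion _ hT
  refine ⟨Nat.card (A ⧸ K), Nat.card_pos, fun b hb x h => haK ?_⟩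
  rw [h]
  refine K.mul_mem (hBK hb) ?_
  rw [← QuotientGroup.eq_one_iff, QuotientGroup.mk_pow, pow_card_eq_one']

/-- The last infinite term `M` of the derived series has finite commutator subgroup, so by the converse
of Schur's theorem the center of `M` has finite index in `M`. -/
lemma exists_infinite_abelian_normal {G : Type*} [Group G] [Infinite G]
    (hsolv : Group.IsSolvable G) (hfg : ∀ K : Subgroup G, K.FG) :
    ∃ A : Subgroup G, A.Normal ∧ Infinite A ∧ ∀ x ∈ A, ∀ y ∈ A, x * y = y * x := by
  obtain ⟨n, hn⟩ := hsolv.solvable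
  have hex : ∃ n, Finite (derivedSeries G n) := ⟨n, by rw [hn]; infer_instance⟩
  classical
  obtain ⟨k, hk⟩ : ∃ k, Nat.find hex = k + 1 := by
    refine Nat.exists_eq_succ_of_ne_zero fun h0 => ?_
    have h := Nat.find_spec hex
    rw [h0, derivedSeries_zero] at h
    have : Finite G := Finite.of_equiv _ Subgroup.topEquiv.toEquiv
    exact not_finite G
  have hfin : Finite (derivedSeries G (k + 1)) := hk ▸ Nat.find_spec hex
  have hinf : Infinite (derivedSeries G k) :=
    not_finite_iff_infinite.1 (Nat.find_min hex (by omega))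
  set M := derivedSeries G k with hM
  have : Group.FG M := (Group.fg_iff_subgroup_fg M).2 (hfg M)
  have : Finite (commutatorSet M) := by
    rw [derivedSeries_succ, ← hM] at hfin
    have hmem : ∀ x : commutatorSet M, ((x : M) : G) ∈ ⁅M, M⁆ := by
      rintro ⟨_, a, b, rfl⟩
      exact Subgroup.commutator_mem_commutator a.2 b.2
    refine Finite.of_injective (fun x => (⟨_, hmem x⟩ : (⁅M, M⁆ : Subgroup G))) ?_
    intro x y h
    exact Subtype.ext (Subtype.ext (Subtype.mk.inj h))
  have : M.Normal := by rw [hM]; infer_instance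
  have hci : (Subgroup.center M).FiniteIndex := inferInstance
  have hcinf : Infinite (Subgroup.center M) := by
    refine not_finite_iff_infinite.1 fun h => ?_
    have h1 := (Subgroup.center M).card_mul_index
    rw [Nat.card_eq_zero_of_infinite (α := M)] at h1
    exact (mul_ne_zero Nat.card_pos.ne' hci.index_ne_zero) h1
  refine ⟨(Subgroup.center M).map M.subtype, inferInstance, ?_, ?_⟩
  · exact Infinite.of_injective _
      ((Subgroup.center M).equivMapOfInjective M.subtype M.subtype_injective).injective
  · rintro _ ⟨x, hx, rfl⟩ _ ⟨y, hy, rfl⟩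
    exact congrArg Subtype.val (Subgroup.mem_center_iff.1 hy x)

/-- The core-free case of the separability theorem: a core-free subgroup maximal among those
avoiding `g` can exist only in a finite group. -/
lemma finite_of_maximal_avoiding {G : Type*} [Group G]
    (hsolv : Group.IsSolvable G) (hfg : ∀ K : Subgroup G, K.FG)
    (M : Subgroup G) (g : G) (hgM : g ∉ M)
    (hmax : ∀ K : Subgroup G, M ≤ K → g ∉ K → K ≤ M)
    (hcore : ∀ N : Subgroup G, N.Normal → N ≤ M → N = ⊥) : Finite G := by
  by_contra hG
  have : Infinite G := not_finite_iff_infinite.1 hG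
  obtain ⟨A, hAn, hAinf, hAc⟩ := exists_infinite_abelian_normal hsolv hfg
  let _ : CommGroup A :=
    { (inferInstance : Group A) with
      mul_comm := fun x y => Subtype.ext (hAc x x.2 y y.2) }
  have : Group.FG A := (Group.fg_iff_subgroup_fg A).2 (hfg A)
  have key : ∀ m : ℕ, 0 < m → ∃ h ∈ M, ∃ b : A, h * (b : G) ^ m = g := by
    intro m hm
    let P : Subgroup G := (powMonoidHom m : A →* A).range.map A.subtype
    have hP : ∀ x, x ∈ P ↔ ∃ b : A, (b : G) ^ m = x := by
      intro x
      constructor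
      · rintro ⟨_, ⟨b, rfl⟩, rfl⟩
        exact ⟨b, rfl⟩
      · rintro ⟨b, rfl⟩
        exact ⟨_, ⟨b, rfl⟩, rfl⟩
    have hPn : P.Normal := by
      refine ⟨fun x hx c => ?_⟩
      obtain ⟨b, rfl⟩ := (hP x).1 hx
      exact (hP _).2 ⟨⟨c * b * c⁻¹, hAn.conj_mem _ b.2 c⟩, conj_pow⟩
    have hPM : ¬ P ≤ M := by
      intro hle
      have hbot := hcore P hPn hle
      have hT : IsMulTorsion A := by
        intro b
        rw [isOfFinOrder_iff_pow_eq_one]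
        refine ⟨m, hm, Subtype.ext ?_⟩
        have h1 : (b : G) ^ m ∈ P := (hP _).2 ⟨b, rfl⟩
        rw [hbot, Subgroup.mem_bot] at h1
        exact h1
      have : Finite A := CommGroup.finite_of_fg_isMulTorsion _ hT
      exact not_finite A
    have hgP : g ∈ M ⊔ P := by
      by_contra hn
      exact hPM (le_sup_right.trans (hmax _ le_sup_left hn))
    obtain ⟨h, hh, z, hz, e⟩ := Subgroup.mem_sup_of_normal_right.1 hgP
    obtain ⟨b, rfl⟩ := (hP z).1 hz
    exact ⟨h, hh, b, e⟩
  obtain ⟨h, hh, a, ha⟩ := key 1 one_pos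
  rw [pow_one] at ha
  have haM : a ∉ M.subgroupOf A := fun hmem =>
    hgM (ha ▸ M.mul_mem hh (Subgroup.mem_subgroupOf.1 hmem))
  obtain ⟨m, hm, hsep⟩ := exists_pow_separating (M.subgroupOf A) a haM
  obtain ⟨h', hh', b, hb⟩ := key m hm
  -- From `h * a = h' * b ^ m`, the element `a * (b ^ m)⁻¹` lies in `M ∩ A`.
  refine hsep (a * (b ^ m)⁻¹) ?_ b (by simp)
  rw [Subgroup.mem_subgroupOf]
  have h1 : ((a * (b ^ m)⁻¹ : A) : G) = h⁻¹ * h' := by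
    change (a : G) * ((b : G) ^ m)⁻¹ = _
    rw [mul_inv_eq_iff_eq_mul, mul_assoc, hb, ← ha, inv_mul_cancel_left]
  rw [h1]
  exact M.mul_mem (M.inv_mem hh) hh'

/-- Mal'cev's theorem: subgroups of polycyclic groups are separable. -/
lemma exists_finiteIndex_avoiding {G : Type*} [Group G]
    (hsolv : Group.IsSolvable G) (hfg : ∀ K : Subgroup G, K.FG) (H : Subgroup G) (g : G) (hg : g ∉ H) :
    ∃ K : Subgroup G, H ≤ K ∧ g ∉ K ∧ K.FiniteIndex := by
  obtain ⟨M, hHM, hgM, hmax⟩ := exists_maximal_avoiding H g hg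
  refine ⟨M, hHM, hgM, ?_⟩
  let π := QuotientGroup.mk' M.normalCore
  have hπ : Function.Surjective π := QuotientGroup.mk'_surjective _
  have hker : π.ker = M.normalCore := QuotientGroup.ker_mk' _
  have hcm : (M.map π).comap π = M := by
    rw [Subgroup.comap_map_eq, hker, sup_eq_left]
    exact M.normalCore_le
  have hfin : Finite (G ⧸ M.normalCore) := by
    refine finite_of_maximal_avoiding (Group.isSolvable_of_surjective hπ) ?_ (M.map π) (π g) ?_ ?_ ?_
    · intro K
      rw [← Subgroup.map_comap_eq_self_of_surjective hπ K]
      obtain ⟨T, hT⟩ := hfg (K.comap π)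
      classical
      exact ⟨T.image π, by rw [Finset.coe_image, ← MonoidHom.map_closure, hT]⟩
    · rw [← Subgroup.mem_comap, hcm]
      exact hgM
    · intro K hK hgK
      have h1 : K.comap π ≤ M :=
        hmax _ (hcm.symm.le.trans (Subgroup.comap_mono hK)) hgK
      rw [← Subgroup.map_comap_eq_self_of_surjective hπ K]
      exact Subgroup.map_mono h1
    · intro N hN hNM
      have h1 : N.comap π ≤ M := (Subgroup.comap_mono hNM).trans hcm.le
      have h2 : N.comap π ≤ M.normalCore := Subgroup.normal_le_normalCore.2 h1
      rw [← Subgroup.map_comap_eq_self_of_surjective hπ N, Subgroup.map_eq_bot_iff, hker]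
      exact h2
  have : M.normalCore.FiniteIndex := Subgroup.finiteIndex_of_finite_quotient
  exact Subgroup.finiteIndex_of_le M.normalCore_le

/-- Whether the infimum defining `cosetDist` is attained is irrelevant: some pair of points of the
two cosets is at distance less than `D + 1`, which is all the packing argument needs. -/
lemma exists_close_of_cosetDist_le {G : Type*} [Group G] {d : G → G → ℝ} {H : Subgroup G}
    {D : ℝ} {g g' : G} (h : cosetDist d (g • (H : Set G)) (g' • (H : Set G)) ≤ D) :
    ∃ x ∈ H, ∃ y ∈ H, d (g * x) (g' * y) < D + 1 := by
  have hne : {r : ℝ | ∃ x ∈ g • (H : Set G), ∃ y ∈ g' • (H : Set G), d x y = r}.Nonempty :=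
    ⟨_, g • 1, Set.smul_mem_smul_set H.one_mem, g' • 1, Set.smul_mem_smul_set H.one_mem, rfl⟩
  obtain ⟨r, ⟨_, ⟨x, hx, rfl⟩, _, ⟨y, hy, rfl⟩, rfl⟩, hr⟩ :=
    exists_lt_of_csInf_lt hne (lt_of_le_of_lt h (lt_add_one D))
  exact ⟨x, hx, y, hy, hr⟩

/-- Every subgroup of a polycyclic group (a solvable group all of whose
subgroups are finitely generated) has bounded packing. -/
theorem polycyclic_hasBoundedPacking {G : Type*} [Group G] (d : G → G → ℝ)
    (hd : IsProperLeftInvMetric G d)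
    (hsolv : IsSolvable G) (hfg : ∀ K : Subgroup G, K.FG)
    (H : Subgroup G) :
    HasBoundedPacking d H := by
  intro D hD
  let ι := {b : G // d 1 b ≤ D + 1 ∧ b ∉ H}
  have hι : Finite ι :=
    ((hd.proper (D + 1) (by linarith)).subset fun b hb => hb.1 :
      {b : G | d 1 b ≤ D + 1 ∧ b ∉ H}.Finite).to_subtype
  choose K hHK hbK hKfin using
    fun b : ι => exists_finiteIndex_avoiding hsolv hfg H b b.2.2
  let L : Subgroup G := ⨅ b, K b
  have hL : L.FiniteIndex := Subgroup.finiteIndex_iInf hKfin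
  have hHL : H ≤ L := le_iInf hHK
  refine ⟨L.index, fun S hS hSD T hT => ?_⟩
  choose f hf using fun A : T => hS A (hT A.2)
  have hinj : Function.Injective fun A : T => (f A : G ⧸ L) := by
    intro A A' hAA
    have hfL : (f A)⁻¹ * f A' ∈ L := QuotientGroup.eq.1 hAA
    have hdist := hSD A (hT A.2) A' (hT A'.2)
    rw [hf A, hf A'] at hdist
    obtain ⟨x, hx, y, hy, hxy⟩ := exists_close_of_cosetDist_le hdist
    have hb : d 1 ((f A * x)⁻¹ * (f A' * y)) ≤ D + 1 := by
      rw [← hd.left_invariant (f A * x), mul_one, mul_inv_cancel_left]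
      exact hxy.le
    have hbe : (f A * x)⁻¹ * (f A' * y) = x⁻¹ * ((f A)⁻¹ * f A') * y := by group
    have hbL : (f A * x)⁻¹ * (f A' * y) ∈ L := by
      rw [hbe]
      exact L.mul_mem (L.mul_mem (L.inv_mem (hHL hx)) hfL) (hHL hy)
    have hbH : (f A * x)⁻¹ * (f A' * y) ∈ H := by
      by_contra hn
      exact hbK ⟨_, hb, hn⟩ (Subgroup.mem_iInf.1 hbL _)
    rw [hbe, H.mul_mem_cancel_right hy, H.mul_mem_cancel_left (H.inv_mem hx)] at hbH
    apply Subtype.ext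
    rw [hf A, hf A']
    exact (leftCoset_eq_iff H).2 hbH
  have : Finite (G ⧸ L) := Subgroup.finite_quotient_of_finiteIndex
  have hcard := Nat.card_le_card_of_injective _ hinj
  rwa [Nat.card_eq_fintype_card, Fintype.card_coe] at hcard
end

section
/- There exist a finitely generated group G that is solvable of derived length at most 3 (the third term of its derived series is trivial), a proper left-invariant metric d on G, and a finitely generated subgroup H of G such that H is metabelian (its second derived subgroup is trivial), H is a retract of G (there is a group homomorphism r : G → G with range H which restricts to the identity on H), and H does not have bounded packing in G with respect to d. -/
/-!
Left cosets of the complement `H` in a semidirect product `N ⋊ H` correspond to elements of `N`,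
and the cosets of `x` and `y` are at bounded distance as soon as `x⁻¹ * y` is `H`-conjugate to one
of finitely many elements of `N`. For `N` abelian, bounded packing therefore fails once `N` has an
infinite subset all of whose nonzero differences lie in a single `H`-orbit.

The example lives in the group `ShiftAff` of transformations
`(j, x) ↦ (j + s, c (j + s) * x + b (j + s))` of `ℤ × ℚ`, with `s : ℤ`, `c : ℤ → ℚˣ`,
`b : ℤ → ℚ`. This group is solvable of derived length at most three: its successive derived subgroups satisfy
`s = 0`, then `c = 1`, then `b = 0`. Fix an enumeration `e : ℤ → ℚˣ` of all nonzero rationals. Let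
`G` be generated by the shift `t`, the multiplication `a` by `e`, and the translation `u` by `1` at
the coordinate `0`. Forgetting `b` is a retraction of `G` onto `H = ⟨t, a⟩`, and `H` is metabelian.
Conjugating `u` by `tⁿ a t⁻ⁿ ∈ H` gives the translation by `e (-n)` at coordinate `0`, so all
nontrivial rational translations at coordinate `0` are `H`-conjugate to `u`
(`ShiftAff.exists_conj`). The corresponding infinitely many cosets of `H` are pairwise at distance
at most `d 1 u`. Any proper left-invariant metric works, for instance the word metric
(`exists_isProperLeftInvMetric`).
-/

open Pointwise

/-! ### A proper left-invariant metric on a finitely generated group -/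

/-- The word metric of a finite generating set. -/
theorem exists_isProperLeftInvMetric (G : Type*) [Group G] (hG : Group.FG G) :
    ∃ d : G → G → ℝ, IsProperLeftInvMetric G d := by
  classical
  obtain ⟨S₀, hS₀, hfin₀⟩ := Group.fg_iff.mp hG
  -- The symmetric generating set containing `1`, so that its powers are the balls.
  obtain ⟨S, hfin, h1, hinv, hsub⟩ : ∃ S : Set G, S.Finite ∧ 1 ∈ S ∧ S⁻¹ = S ∧ S₀ ⊆ S := by
    refine ⟨insert 1 (S₀ ∪ S₀⁻¹), (hfin₀.union hfin₀.inv).insert 1, by simp, ?_, ?_⟩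
    · ext x
      simp only [Set.mem_inv, Set.mem_insert_iff, Set.mem_union, inv_inv, inv_eq_one]
      tauto
    · intro x hx
      simp [hx]
  have hpinv : ∀ n x, x ∈ S ^ n → x⁻¹ ∈ S ^ n := by
    intro n x hx
    rw [← hinv, inv_pow]
    simpa using hx
  have hex : ∀ x : G, ∃ n, x ∈ S ^ n := by
    intro x
    have hx : x ∈ Subgroup.closure S₀ := by rw [hS₀]; trivial
    induction hx using Subgroup.closure_induction with
    | mem x hx => exact ⟨1, by simpa using hsub hx⟩
    | one => exact ⟨0, by simp⟩
    | mul x y _ _ hx hy =>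
      obtain ⟨m, hm⟩ := hx
      obtain ⟨n, hn⟩ := hy
      exact ⟨m + n, by rw [pow_add]; exact Set.mul_mem_mul hm hn⟩
    | inv x _ hx =>
      obtain ⟨m, hm⟩ := hx
      exact ⟨m, hpinv m x hm⟩
  let ℓ : G → ℕ := fun x => Nat.find (hex x)
  have hℓ : ∀ x, x ∈ S ^ ℓ x := fun x => Nat.find_spec (hex x)
  have hle : ∀ x n, x ∈ S ^ n → ℓ x ≤ n := fun x n h => Nat.find_min' (hex x) h
  have hone : ℓ 1 = 0 := Nat.le_zero.mp (hle 1 0 (by simp))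
  have hℓinv : ∀ x, ℓ x⁻¹ ≤ ℓ x := fun x => hle _ _ (hpinv _ _ (hℓ x))
  refine ⟨fun x y => ℓ (x⁻¹ * y), ?_, ?_, ?_, ?_, ?_, ?_⟩
  · intro x
    simp [hone]
  · intro x y h
    have h0 : ℓ (x⁻¹ * y) = 0 := by exact_mod_cast h
    have := hℓ (x⁻¹ * y)
    rw [h0, pow_zero, Set.mem_one] at this
    exact inv_mul_eq_one.mp this
  · intro x y
    have h₁ := hℓinv (x⁻¹ * y)
    have h₂ := hℓinv (y⁻¹ * x)
    simp only [mul_inv_rev, inv_inv] at h₁ h₂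
    exact_mod_cast le_antisymm h₂ h₁
  · intro x y z
    have : ℓ (x⁻¹ * z) ≤ ℓ (x⁻¹ * y) + ℓ (y⁻¹ * z) := by
      apply hle
      rw [pow_add]
      exact ⟨_, hℓ _, _, hℓ _, by group⟩
    exact_mod_cast this
  · intro g x y
    simp only [mul_inv_rev, mul_assoc, inv_mul_cancel_left]
  · intro r _
    have hpow : ∀ n : ℕ, (S ^ n).Finite := by
      intro n
      induction n with
      | zero => simp
      | succ n ih => rw [pow_succ]; exact ih.mul hfin
    refine (hpow ⌊r⌋₊).subset ?_
    intro g hg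
    have hg' : (ℓ g : ℝ) ≤ r := by simpa using hg
    exact Set.pow_subset_pow_right h1 (Nat.le_floor hg') (hℓ g)

/-! ### The ambient solvable group -/

/-- The element `(s, c, b)` stands for the permutation
`(j, x) ↦ (j + s, c (j + s) * x + b (j + s))` of `ℤ × ℚ`. Thus `ShiftAff` is the unrestricted
wreath product of the affine group of `ℚ` by `ℤ`. -/
@[ext]
structure ShiftAff where
  /-- The shift of the integer coordinate. -/
  s : ℤ
  /-- The dilation factors, indexed by the target coordinate. -/
  c : ℤ → ℚˣ
  /-- The translation parts, indexed by the target coordinate. -/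
  b : ℤ → ℚ

namespace ShiftAff

/-- Multiplication is composition of permutations. -/
instance : Mul ShiftAff :=
  ⟨fun g h => ⟨g.s + h.s, fun j => g.c j * h.c (j - g.s), fun j => g.b j + g.c j * h.b (j - g.s)⟩⟩

instance : One ShiftAff := ⟨⟨0, 1, 0⟩⟩

instance : Inv ShiftAff :=
  ⟨fun g => ⟨-g.s, fun j => (g.c (j + g.s))⁻¹,
    fun j => -(((g.c (j + g.s))⁻¹ : ℚˣ) * g.b (j + g.s))⟩⟩

@[simp] lemma mul_s (g h : ShiftAff) : (g * h).s = g.s + h.s := rfl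
@[simp] lemma mul_c (g h : ShiftAff) (j : ℤ) : (g * h).c j = g.c j * h.c (j - g.s) := rfl
@[simp] lemma mul_b (g h : ShiftAff) (j : ℤ) :
    (g * h).b j = g.b j + g.c j * h.b (j - g.s) := rfl
@[simp] lemma one_s : (1 : ShiftAff).s = 0 := rfl
@[simp] lemma one_c (j : ℤ) : (1 : ShiftAff).c j = 1 := rfl
@[simp] lemma one_b (j : ℤ) : (1 : ShiftAff).b j = 0 := rfl
@[simp] lemma inv_s (g : ShiftAff) : g⁻¹.s = -g.s := rfl
@[simp] lemma inv_c (g : ShiftAff) (j : ℤ) : g⁻¹.c j = (g.c (j + g.s))⁻¹ := rfl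
@[simp] lemma inv_b (g : ShiftAff) (j : ℤ) :
    g⁻¹.b j = -(((g.c (j + g.s))⁻¹ : ℚˣ) * g.b (j + g.s)) := rfl

instance : Group ShiftAff :=
  Group.ofLeftAxioms
    (by
      intro g h k
      ext j
      · simp [add_assoc]
      · simp [mul_assoc, sub_sub]
      · simp [sub_sub]
        ring)
    (by intro g; ext j <;> simp)
    (by intro g; ext j <;> simp)

/-- Forgetting the translation part. -/
def linPart : ShiftAff →* ShiftAff where
  toFun g := ⟨g.s, g.c, 0⟩
  map_one' := rfl
  map_mul' g h := by ext j <;> simp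

@[simp] lemma linPart_s (g : ShiftAff) : (linPart g).s = g.s := rfl
@[simp] lemma linPart_c (g : ShiftAff) : (linPart g).c = g.c := rfl
@[simp] lemma linPart_b (g : ShiftAff) : (linPart g).b = 0 := rfl

lemma linPart_linPart (g : ShiftAff) : linPart (linPart g) = linPart g := rfl

/-- The normal subgroup of elements which preserve every line `{j} × ℚ`. -/
def fiberwise : Subgroup ShiftAff where
  carrier := {g | g.s = 0}
  one_mem' := rfl
  mul_mem' {g h} hg hh := by
    simp only [Set.mem_ofPred_eq] at *
    simp [hg, hh]
  inv_mem' {g} hg := by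
    simp only [Set.mem_ofPred_eq] at *
    simp [hg]

/-- The abelian normal subgroup of elements which act on every line `{j} × ℚ` by a translation. -/
def translations : Subgroup ShiftAff where
  carrier := {g | g.s = 0 ∧ ∀ j, g.c j = 1}
  one_mem' := ⟨rfl, fun _ => rfl⟩
  mul_mem' {g h} hg hh := by
    simp only [Set.mem_ofPred_eq] at *
    simp [hg, hh]
  inv_mem' {g} hg := by
    simp only [Set.mem_ofPred_eq] at *
    simp [hg]

lemma mem_fiberwise {g : ShiftAff} : g ∈ fiberwise ↔ g.s = 0 := Iff.rfl

lemma mem_translations {g : ShiftAff} : g ∈ translations ↔ g.s = 0 ∧ ∀ j, g.c j = 1 := Iff.rfl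

lemma derivedSeries_one_le : derivedSeries ShiftAff 1 ≤ fiberwise := by
  rw [derivedSeries_succ, Subgroup.commutator_le]
  intro g _ h _
  simp [mem_fiberwise, commutatorElement_def]

lemma derivedSeries_two_le : derivedSeries ShiftAff 2 ≤ translations := by
  rw [derivedSeries_succ]
  refine (Subgroup.commutator_mono derivedSeries_one_le derivedSeries_one_le).trans ?_
  rw [Subgroup.commutator_le]
  intro g hg h hh
  rw [mem_fiberwise] at hg hh
  simp [mem_translations, commutatorElement_def, hg, hh, mul_right_comm]

lemma derivedSeries_three : derivedSeries ShiftAff 3 = ⊥ := by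
  rw [derivedSeries_succ, eq_bot_iff]
  refine (Subgroup.commutator_mono derivedSeries_two_le derivedSeries_two_le).trans ?_
  rw [Subgroup.commutator_le]
  intro g hg h hh
  rw [mem_translations] at hg hh
  rw [Subgroup.mem_bot]
  ext j <;> simp [commutatorElement_def, hg, hh]

/-! ### The generators -/

/-- The shift by `n`. -/
def shift (n : ℤ) : ShiftAff := ⟨n, 1, 0⟩

/-- Multiplication by `e j` on the line `{j} × ℚ`. -/
def dil (e : ℤ → ℚˣ) : ShiftAff := ⟨0, e, 0⟩

/-- Translation by `q` on the line `{0} × ℚ`, and the identity on the other lines. -/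
def trans (q : ℚ) : ShiftAff := ⟨0, 1, Pi.single 0 q⟩

lemma trans_inv_mul (p q : ℚ) : (trans p)⁻¹ * trans q = trans (q - p) := by
  ext j
  · simp [trans]
  · simp [trans]
  · simp [trans, Pi.single_apply]
    split_ifs <;> ring

lemma trans_zero : trans 0 = 1 := by
  ext j <;> simp [trans]

lemma linPart_trans (q : ℚ) : linPart (trans q) = 1 := rfl

/-- The group generated by the unit shift, the dilation `dil e` and the unit translation on the
line `{0} × ℚ`. -/
def gen (e : ℤ → ℚˣ) : Subgroup ShiftAff :=
  Subgroup.closure {shift 1, dil e, trans 1}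

variable {e : ℤ → ℚˣ}

lemma shift_one_mem : shift 1 ∈ gen e := Subgroup.subset_closure (by simp)

lemma dil_mem : dil e ∈ gen e := Subgroup.subset_closure (by simp)

lemma trans_one_mem : trans 1 ∈ gen e := Subgroup.subset_closure (by simp)

lemma shift_mem (n : ℤ) : shift n ∈ gen e := by
  have hadd : ∀ m k : ℤ, shift (m + k) = shift m * shift k := by
    intro m k
    ext j <;> simp [shift]
  have hneg : shift (-1) = (shift 1)⁻¹ := by
    ext j <;> simp [shift]
  induction n using Int.induction_on with
  | zero => exact one_mem _
  | succ n ih => rw [hadd]; exact mul_mem ih shift_one_mem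
  | pred n ih => rw [sub_eq_add_neg, hadd, hneg]; exact mul_mem ih (inv_mem shift_one_mem)

lemma linPart_mem {g : ShiftAff} (hg : g ∈ gen e) : linPart g ∈ gen e := by
  suffices h : gen e ≤ (gen e).comap linPart from h hg
  rw [gen, Subgroup.closure_le]
  rintro _ (rfl | rfl | rfl)
  · exact shift_one_mem (e := e)
  · exact dil_mem (e := e)
  · exact one_mem (gen e)

/-- If `e` enumerates all units of `ℚ`, then all nontrivial translations on the line `{0} × ℚ` are
conjugate to the unit translation, by elements of `gen e` without translation part. -/
lemma exists_conj (he : Function.Surjective e) {q : ℚ} (hq : q ≠ 0) :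
    ∃ h ∈ gen e, linPart h = h ∧ h * trans 1 * h⁻¹ = trans q := by
  obtain ⟨n, hn⟩ := he (Units.mk0 q hq)
  refine ⟨shift (-n) * dil e * shift n,
    mul_mem (mul_mem (shift_mem _) dil_mem) (shift_mem _), ?_, ?_⟩
  · ext j <;> simp [shift, dil]
  · ext j
    · simp [shift, dil, trans]
    · simp [shift, dil, trans]
    · by_cases hj : j = 0
      · subst hj
        simp [shift, dil, trans, hn]
      · simp [shift, dil, trans, hj]

lemma trans_mem (he : Function.Surjective e) (q : ℚ) : trans q ∈ gen e := by
  by_cases hq : q = 0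
  · rw [hq, trans_zero]
    exact one_mem _
  · obtain ⟨h, hh, -, hconj⟩ := exists_conj he hq
    rw [← hconj]
    exact mul_mem (mul_mem hh trans_one_mem) (inv_mem hh)

lemma fg_gen : Group.FG (gen e) :=
  (Group.fg_iff_subgroup_fg _).mpr
    ((Subgroup.fg_iff _).mpr ⟨{shift 1, dil e, trans 1}, rfl, Set.toFinite _⟩)

/-- The retraction of `gen e` which forgets the translation part. -/
def retr (e : ℤ → ℚˣ) : gen e →* gen e :=
  (linPart.comp (gen e).subtype).codRestrict (gen e) fun g => linPart_mem g.2

lemma coe_retr (g : gen e) : (retr e g : ShiftAff) = linPart g := rfl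

lemma mem_range_retr {g : gen e} : g ∈ (retr e).range ↔ linPart (g : ShiftAff) = g := by
  constructor
  · rintro ⟨k, rfl⟩
    rw [coe_retr, linPart_linPart]
  · intro h
    exact ⟨g, Subtype.ext h⟩

lemma derivedSeries_gen : derivedSeries (gen e) 3 = ⊥ := by
  have h := map_derivedSeries_le_derivedSeries (gen e).subtype 3
  rw [derivedSeries_three, le_bot_iff] at h
  exact (Subgroup.map_eq_bot_iff_of_injective _ (gen e).subtype_injective).mp h

lemma derivedSeries_range_retr : derivedSeries (retr e).range 2 = ⊥ := by
  rw [eq_bot_iff]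
  intro g hg
  have h := derivedSeries_two_le
    (map_derivedSeries_le_derivedSeries ((gen e).subtype.comp (retr e).range.subtype) 2
      (Subgroup.mem_map_of_mem _ hg))
  rw [mem_translations] at h
  have hlin : linPart ((g : gen e) : ShiftAff) = (g : gen e) := mem_range_retr.mp g.2
  have hone : ((g : gen e) : ShiftAff) = 1 := by
    rw [← hlin]
    ext j
    · exact h.1
    · exact congrArg Units.val (h.2 j)
    · rfl
  rw [Subgroup.mem_bot]
  exact Subtype.ext (Subtype.ext hone)

/-- The cosets of the translations on the line `{0} × ℚ` are infinitely many and pairwise at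
distance at most `d 1 (trans 1)`. -/
lemma not_hasBoundedPacking (he : Function.Surjective e) {d : gen e → gen e → ℝ}
    (hd : IsProperLeftInvMetric (gen e) d) : ¬ HasBoundedPacking d (retr e).range := by
  classical
  have hnonneg : ∀ x y, 0 ≤ d x y := by
    intro x y
    have h := hd.triangle x y x
    rw [hd.self, hd.symm y x] at h
    linarith
  let τ : ℚ → gen e := fun q => ⟨trans q, trans_mem he q⟩
  have hτ : ∀ p q, (τ p)⁻¹ * τ q = τ (q - p) := fun p q => Subtype.ext (trans_inv_mul p q)
  let C : ℚ → Set (gen e) := fun q => τ q • ((retr e).range : Set (gen e))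
  have hC : Function.Injective C := by
    intro p q hpq
    have hmem : (τ p)⁻¹ * τ q ∈ (retr e).range := by
      rwa [← leftCoset_eq_iff]
    rw [hτ, mem_range_retr] at hmem
    have h0 := congrFun (congrArg ShiftAff.b hmem) 0
    simp only [τ, trans, linPart_b, Pi.zero_apply, Pi.single_eq_same] at h0
    linarith
  have hdist : ∀ p q, cosetDist d (C p) (C q) ≤ d 1 (τ 1) + 1 := by
    intro p q
    suffices h : ∃ x ∈ C p, ∃ y ∈ C q, d x y ≤ d 1 (τ 1) + 1 by
      obtain ⟨x, hx, y, hy, hxy⟩ := h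
      have hbdd : BddBelow {r : ℝ | ∃ x ∈ C p, ∃ y ∈ C q, d x y = r} := by
        refine ⟨0, ?_⟩
        rintro _ ⟨x, _, y, _, rfl⟩
        exact hnonneg x y
      exact (csInf_le hbdd ⟨x, hx, y, hy, rfl⟩).trans hxy
    by_cases hpq : p = q
    · subst hpq
      refine ⟨τ p * 1, ⟨1, one_mem _, rfl⟩, τ p * 1, ⟨1, one_mem _, rfl⟩, ?_⟩
      rw [hd.self]
      linarith [hnonneg 1 (τ 1)]
    · obtain ⟨h, hh, hlin, hconj⟩ := exists_conj he (sub_ne_zero.mpr (Ne.symm hpq))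
      have hH : (⟨h, hh⟩ : gen e) ∈ (retr e).range := mem_range_retr.mpr hlin
      refine ⟨τ p * (⟨h, hh⟩ : gen e), ⟨_, hH, rfl⟩, τ q * (⟨h, hh⟩ : gen e), ⟨_, hH, rfl⟩, ?_⟩
      have hq : τ q * (⟨h, hh⟩ : gen e) = τ p * (⟨h, hh⟩ : gen e) * τ 1 := by
        have h₁ : τ (q - p) = (⟨h, hh⟩ : gen e) * τ 1 * (⟨h, hh⟩ : gen e)⁻¹ :=
          Subtype.ext hconj.symm
        have h₂ : τ q = τ p * τ (q - p) := by rw [← hτ]; group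
        rw [h₂, h₁]
        group
      have hleft := hd.left_invariant (τ p * (⟨h, hh⟩ : gen e)) 1 (τ 1)
      rw [mul_one] at hleft
      rw [hq, hleft]
      linarith
  intro hbp
  -- The summand `1` keeps the bound positive without appealing to `trans 1 ≠ 1`.
  obtain ⟨n, hn⟩ := hbp (d 1 (τ 1) + 1) (by linarith [hnonneg 1 (τ 1)])
  have hcard := hn (Set.range C)
    (by rintro _ ⟨q, rfl⟩; exact ⟨τ q, rfl⟩)
    (by rintro _ ⟨p, rfl⟩ _ ⟨q, rfl⟩; exact hdist p q)
    ((Finset.range (n + 1)).image fun k : ℕ => C k)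
    (by
      intro A hA
      simp only [Finset.coe_image, Set.mem_image] at hA
      obtain ⟨k, -, rfl⟩ := hA
      exact ⟨k, rfl⟩)
  have hinj : Function.Injective fun k : ℕ => C k := hC.comp Nat.cast_injective
  rw [Finset.card_image_of_injective _ hinj, Finset.card_range] at hcard
  omega

end ShiftAff

/-- There is a finitely generated solvable group of derived length at most 3
with a finitely generated metabelian retract that does not have bounded packing
with respect to some proper left-invariant metric. -/
theorem exists_solvable_retract_without_boundedPacking :
    ∃ (G : Type) (_ : Group G) (d : G → G → ℝ) (H : Subgroup G),
      IsProperLeftInvMetric G d ∧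
      Group.FG G ∧
      derivedSeries G 3 = ⊥ ∧
      H.FG ∧
      derivedSeries H 2 = ⊥ ∧
      (∃ r : G →* G, r.range = H ∧ ∀ h ∈ H, r h = h) ∧
      ¬ HasBoundedPacking d H := by
  have : Countable ℚˣ := Units.val_injective.countable
  obtain ⟨f, hf⟩ := exists_surjective_nat ℚˣ
  obtain ⟨e, he⟩ : ∃ e : ℤ → ℚˣ, Function.Surjective e :=
    ⟨fun j => f j.toNat, fun x => (hf x).imp' (fun n : ℕ => (n : ℤ)) (by simp)⟩
  have hfg : Group.FG (ShiftAff.gen e) := ShiftAff.fg_gen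
  obtain ⟨d, hd⟩ := exists_isProperLeftInvMetric (ShiftAff.gen e) hfg
  refine ⟨ShiftAff.gen e, inferInstance, d, (ShiftAff.retr e).range, hd, hfg,
    ShiftAff.derivedSeries_gen, ?_, ShiftAff.derivedSeries_range_retr,
    ⟨ShiftAff.retr e, rfl, fun h hh => Subtype.ext (ShiftAff.mem_range_retr.mp hh)⟩,
    ShiftAff.not_hasBoundedPacking he hd⟩
  exact (Group.fg_iff_subgroup_fg _).mp (Group.fg_range (ShiftAff.retr e))
end

section
/- Let N be a nontrivial finitely generated group, Q a finitely generated group, and X an infinite set on which Q acts 2-transitively (for all a ≠ b and c ≠ d in X there is q ∈ Q with q·a = c and q·b = d). Let B be the subgroup of the direct product ∏_{x ∈ X} N consisting of functions f : X → N with f(x) = 1 for all but finitely many x, on which Q acts by (q·f)(x) = f(q⁻¹·x), and let G = B ⋊ Q be the corresponding semidirect product (the generalized restricted wreath product N ≀_X Q). Then for every proper left-invariant metric d on G, the subgroup {1} ⋊ Q does not have bounded packing in G with respect to d. -/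
/-!
Fix `u ≠ 1` in `N` and let `δ x` be the element of the restricted product with value `u` at `x`
and `1` elsewhere. In the wreath product, `q * δ a = δ (q • a) * q`, so by left invariance the
cosets `δ x * Q` and `δ y * Q` are at distance at most `d (δ a) (δ b)` as soon as some `q ∈ Q` maps
`(a, b)` to `(x, y)`. Fixing `a ≠ b`, 2-transitivity provides such a `q` for all `x ≠ y`. These
cosets are pairwise distinct because `Q` meets the restricted product trivially, so there are
infinitely many cosets at uniformly bounded pairwise distance.
-/

open Pointwise

/-- The restricted direct product of copies of `N` indexed by `X`: functions
`X → N` equal to `1` outside a finite set, as a subgroup of `∏_{x ∈ X} N`. -/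
def restrictedProd (N X : Type*) [Group N] : Subgroup (X → N) where
  carrier := {f | {x | f x ≠ 1}.Finite}
  one_mem' := by simp
  mul_mem' := by
    intro f g hf hg
    apply (hf.union hg).subset
    intro x hx
    simp only [Set.mem_union, Set.mem_setOf_eq]
    by_contra h
    push_neg at h
    exact hx (by simp [Pi.mul_apply, h.1, h.2])
  inv_mem' := by
    intro f hf
    apply hf.subset
    intro x hx
    simpa using hx

/-- The permutation action of `Q` on the restricted product, `(q • f) x = f (q⁻¹ • x)`,
as an automorphism. -/
def wreathAut {N Q X : Type*} [Group N] [Group Q] [MulAction Q X] (q : Q) :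
    restrictedProd N X ≃* restrictedProd N X where
  toFun f := ⟨fun x => f.1 (q⁻¹ • x), by
    apply (f.2.image (fun x => q • x)).subset
    intro x hx
    exact ⟨q⁻¹ • x, hx, by simp⟩⟩
  invFun f := ⟨fun x => f.1 (q • x), by
    apply (f.2.image (fun x => q⁻¹ • x)).subset
    intro x hx
    exact ⟨q • x, hx, by simp⟩⟩
  left_inv f := Subtype.ext (funext fun x => by simp)
  right_inv f := Subtype.ext (funext fun x => by simp)
  map_mul' f g := rfl

/-- The action of `Q` on the restricted product as a homomorphism into the
automorphism group. -/
def wreathHom (N Q X : Type*) [Group N] [Group Q] [MulAction Q X] :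
    Q →* MulAut (restrictedProd N X) where
  toFun := wreathAut
  map_one' := by
    apply MulEquiv.ext
    intro f
    exact Subtype.ext (funext fun x => by simp [wreathAut])
  map_mul' q₁ q₂ := by
    apply MulEquiv.ext
    intro f
    exact Subtype.ext (funext fun x => by simp [wreathAut, mul_smul])

open Classical in
/-- The element of the restricted product with value `u` at `x` and `1` elsewhere. -/
noncomputable def restrictedSingle {N X : Type*} [Group N] (u : N) (x : X) :
    restrictedProd N X :=
  ⟨Pi.mulSingle x u, by
    apply (Set.finite_singleton x).subset
    intro y hy
    by_contra h
    exact hy (Pi.mulSingle_eq_of_ne (M := fun _ => N) h u)⟩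

theorem restrictedSingle_injective {N X : Type*} [Group N] {u : N} (hu : u ≠ 1) :
    Function.Injective (restrictedSingle (X := X) u) := by
  classical
  intro x y h
  by_contra hxy
  have h1 := congrFun (congrArg Subtype.val h) x
  simp only [restrictedSingle, Pi.mulSingle_eq_same, Pi.mulSingle_eq_of_ne hxy] at h1
  exact hu h1

theorem wreathHom_restrictedSingle {N Q X : Type*} [Group N] [Group Q] [MulAction Q X]
    (u : N) (q : Q) (x : X) :
    wreathHom N Q X q (restrictedSingle u x) = restrictedSingle u (q • x) := by
  classical
  apply Subtype.ext
  funext y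
  change (Pi.mulSingle x u : X → N) (q⁻¹ • y) = (Pi.mulSingle (q • x) u : X → N) y
  simp only [Pi.mulSingle_apply, inv_smul_eq_iff]

theorem inr_mul_inl_restrictedSingle {N Q X : Type*} [Group N] [Group Q] [MulAction Q X]
    (u : N) (q : Q) (x : X) :
    (SemidirectProduct.inr q * SemidirectProduct.inl (restrictedSingle u x) :
      restrictedProd N X ⋊[wreathHom N Q X] Q) =
      SemidirectProduct.inl (restrictedSingle u (q • x)) * SemidirectProduct.inr q := by
  rw [← wreathHom_restrictedSingle, SemidirectProduct.inl_aut]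
  simp [mul_assoc]

/-- Distinct elements of the normal factor of a semidirect product represent distinct left cosets
of the complement. -/
theorem inl_smul_range_inr_injective {B Q : Type*} [Group B] [Group Q] (φ : Q →* MulAut B) :
    Function.Injective fun f : B =>
      (SemidirectProduct.inl f : B ⋊[φ] Q) •
        ((SemidirectProduct.inr (φ := φ)).range : Set (B ⋊[φ] Q)) := by
  intro f g h
  have h1 : (SemidirectProduct.inl f : B ⋊[φ] Q) ∈ (SemidirectProduct.inl g : B ⋊[φ] Q) •
      ((SemidirectProduct.inr (φ := φ)).range : Set (B ⋊[φ] Q)) := by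
    simp only at h
    rw [← h]
    exact ⟨1, one_mem _, mul_one _⟩
  obtain ⟨_, ⟨q, rfl⟩, hq⟩ := h1
  have h2 := congrArg SemidirectProduct.left hq
  simpa using h2.symm

/-- If `Q` acts 2-transitively on an infinite set `X` and `N` is a nontrivial
finitely generated group, `Q` finitely generated, then the canonical copy of `Q`
in the generalized restricted wreath product `N ≀_X Q = B ⋊ Q` does not have
bounded packing. -/
theorem wreath_inr_not_hasBoundedPacking {N Q X : Type*} [Group N] [Group Q]
    [MulAction Q X] [Infinite X] [Nontrivial N]
    (hNfg : Group.FG N) (hQfg : Group.FG Q)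
    (h2trans : ∀ a b c e : X, a ≠ b → c ≠ e → ∃ q : Q, q • a = c ∧ q • b = e)
    (d : (restrictedProd N X ⋊[wreathHom N Q X] Q) →
         (restrictedProd N X ⋊[wreathHom N Q X] Q) → ℝ)
    (hd : IsProperLeftInvMetric (restrictedProd N X ⋊[wreathHom N Q X] Q) d) :
    ¬ HasBoundedPacking d (SemidirectProduct.inr (φ := wreathHom N Q X)).range := by
  intro hbp
  obtain ⟨u, hu⟩ := exists_ne (1 : N)
  obtain ⟨a, b, hab⟩ := exists_pair_ne X
  let δ : X → restrictedProd N X ⋊[wreathHom N Q X] Q :=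
    fun x => SemidirectProduct.inl (restrictedSingle u x)
  let C : X → Set (restrictedProd N X ⋊[wreathHom N Q X] Q) :=
    fun x => δ x • ((SemidirectProduct.inr (φ := wreathHom N Q X)).range :
      Set (restrictedProd N X ⋊[wreathHom N Q X] Q))
  have hC : Function.Injective C :=
    (inl_smul_range_inr_injective (wreathHom N Q X)).comp (restrictedSingle_injective hu)
  have h_mem : ∀ (q : Q) (x : X), SemidirectProduct.inr q * δ x ∈ C (q • x) := fun q x =>
    ⟨SemidirectProduct.inr q, ⟨q, rfl⟩, (inr_mul_inl_restrictedSingle u q x).symm⟩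
  have h0 := hd.nonneg (δ a) (δ b)
  -- The summand `1` makes the bound strictly positive.
  obtain ⟨n, hn⟩ := hbp (d (δ a) (δ b) + 1) (by linarith)
  obtain ⟨T, hTC, hT⟩ := (Set.infinite_range_of_injective hC).exists_subset_card_eq (n + 1)
  have h_card : T.card ≤ n := by
    refine hn (Set.range C) ?_ ?_ T hTC
    · rintro _ ⟨x, rfl⟩
      exact ⟨δ x, rfl⟩
    · rintro _ ⟨x, rfl⟩ _ ⟨y, rfl⟩
      rcases eq_or_ne x y with rfl | hxy
      · have h_self : δ x ∈ C x := ⟨1, one_mem _, mul_one _⟩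
        have := cosetDist_le hd h_self h_self
        rw [hd.self] at this
        linarith
      · obtain ⟨q, rfl, rfl⟩ := h2trans a b x y hab hxy
        have := cosetDist_le hd (h_mem q a) (h_mem q b)
        rw [hd.left_invariant] at this
        linarith
  omega
end

section
/- There exist groups N and G with G finitely generated, a surjective group homomorphism π : G → ℤ * (ℤ/2ℤ) (the free product of the integers with the cyclic group of order 2) with kernel N, a group homomorphism s : ℤ * (ℤ/2ℤ) → G with π ∘ s the identity (so the sequence 1 → N → G → ℤ * (ℤ/2ℤ) → 1 is split exact), and a proper left-invariant metric d on G, such that the subgroup s(ℤ * (ℤ/2ℤ)) of G does not have bounded packing in G with respect to d. -/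
/-!
Let `Q = ℤ * ℤ/2` act on `ℤ` by letting the generator of `ℤ` translate by `1` and the involution
swap `0` and `1`. The conjugates of the swap by translations are all the adjacent transpositions
`(n n+1)`, so the action is 2-transitive. Let `Q` act on the free group `N` on the letters
`x ∈ ℤ` by permuting the letters, and put `G = N ⋊ Q`.

The group `G` is generated by `Q` and the single letter `0`, since `Q` is transitive on letters.
The cosets `xQ`, one for each letter `x ∈ ℤ`, are pairwise distinct. If `x ≠ y` and `q ∈ Q` sends
`(0, 1)` to `(x, y)`, then `xq ∈ xQ` and `yq ∈ yQ` satisfy `(xq)⁻¹(yq) = q⁻¹(x⁻¹y)q = 0⁻¹1`, where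
`0` and `1` on the right are letters. So by left invariance any two of these infinitely many
cosets are within the same distance `d(0, 1)` of each other, whatever the metric `d`. The word
metric is a proper left-invariant choice of `d`.
-/

open Pointwise

namespace BoundedPackingExample

open Monoid

section WordMetric

variable {G : Type*} [Group G]

/-- Word length with respect to `B`: the least `n` with `g ∈ B ^ n`. It is the
usual word length when `B` generates `G` as a monoid; elements that lie in no power of `B` get the
junk value `0`. -/
noncomputable def wordLength (B : Set G) (g : G) : ℕ := sInf {n : ℕ | g ∈ B ^ n}

lemma exists_isProperLeftInvMetric (hG : Group.FG G) :
    ∃ d : G → G → ℝ, IsProperLeftInvMetric G d := by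
  obtain ⟨S, hS, hfin⟩ := Group.fg_iff.1 hG
  set B : Set G := insert 1 (S ∪ S⁻¹) with hB
  have hBfin : B.Finite := (hfin.union hfin.inv).insert 1
  have h1 : (1 : G) ∈ B := Set.mem_insert _ _
  have hBinv : B⁻¹ = B := by
    ext x
    simp only [hB, Set.mem_inv, Set.mem_insert_iff, Set.mem_union, inv_eq_one, inv_inv]
    tauto
  have hex : ∀ g : G, ∃ n : ℕ, g ∈ B ^ n := by
    intro g
    have hg : g ∈ Subgroup.closure S := hS ▸ Subgroup.mem_top g
    induction hg using Subgroup.closure_induction with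
    | mem x hx => exact ⟨1, by simpa [hB] using Or.inr (Or.inl hx)⟩
    | one => exact ⟨0, by simp⟩
    | mul x y _ _ hx hy =>
      obtain ⟨m, hm⟩ := hx
      obtain ⟨n, hn⟩ := hy
      exact ⟨m + n, by rw [pow_add]; exact Set.mul_mem_mul hm hn⟩
    | inv x _ hx =>
      obtain ⟨m, hm⟩ := hx
      refine ⟨m, ?_⟩
      rw [← hBinv, inv_pow]
      simpa using hm
  have hmem : ∀ g : G, g ∈ B ^ wordLength B g := fun g ↦ Nat.sInf_mem (hex g)
  have hle : ∀ (g : G) (n : ℕ), g ∈ B ^ n → wordLength B g ≤ n := fun g n h ↦ Nat.sInf_le h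
  have hinv : ∀ g : G, wordLength B g⁻¹ ≤ wordLength B g := by
    intro g
    apply hle
    rw [← hBinv, inv_pow, hBinv]
    simpa using hmem g
  refine ⟨fun x y ↦ wordLength B (x⁻¹ * y), ?_, ?_, ?_, ?_, ?_, ?_⟩
  · intro x
    have := hle (1 : G) 0 (by simp)
    simpa using this
  · intro x y h
    have h0 : wordLength B (x⁻¹ * y) = 0 := by exact_mod_cast h
    have := hmem (x⁻¹ * y)
    rw [h0, pow_zero, Set.mem_one] at this
    exact (inv_mul_eq_one.1 this)
  · intro x y
    have a := hinv (x⁻¹ * y)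
    have b := hinv (y⁻¹ * x)
    simp only [mul_inv_rev, inv_inv] at a b
    exact_mod_cast le_antisymm b a
  · intro x y z
    have : wordLength B (x⁻¹ * z) ≤ wordLength B (x⁻¹ * y) + wordLength B (y⁻¹ * z) := by
      apply hle
      rw [pow_add]
      exact ⟨_, hmem (x⁻¹ * y), _, hmem (y⁻¹ * z), by simp [mul_assoc]⟩
    exact_mod_cast this
  · intro g x y
    simp [mul_assoc]
  · intro r _
    have hpow : ∀ n : ℕ, (B ^ n).Finite := by
      intro n
      induction n with
      | zero => simp
      | succ n ih => rw [pow_succ]; exact ih.mul hBfin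
    refine (hpow ⌊r⌋₊).subset fun g hg ↦ ?_
    simp only [inv_one, one_mul, Set.mem_ofPred_eq] at hg
    exact Set.pow_subset_pow_right h1 (Nat.le_floor hg) (hmem g)

lemma _root_.IsProperLeftInvMetric.nonneg_s19 {d : G → G → ℝ} (hd : IsProperLeftInvMetric G d) (x y : G) :
    0 ≤ d x y := by
  have := hd.triangle x y x
  rw [hd.self, hd.symm y x] at this
  linarith

lemma cosetDist_le {d : G → G → ℝ} (hd : IsProperLeftInvMetric G d) {A B : Set G} {x y : G}
    (hx : x ∈ A) (hy : y ∈ B) : cosetDist d A B ≤ d x y :=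
  csInf_le ⟨0, by rintro _ ⟨a, _, b, _, rfl⟩; exact hd.nonneg_s19 a b⟩ ⟨x, hx, y, hy, rfl⟩

end WordMetric

/-- The free product `ℤ * ℤ/2`. -/
abbrev Q : Type := Coprod (Multiplicative ℤ) (Multiplicative (ZMod 2))

/-- The homomorphism `ℤ/2 → Perm ℤ` sending the generator to the transposition `(0 1)`. -/
def swapHom : Multiplicative (ZMod 2) →* Equiv.Perm ℤ where
  toFun x := Equiv.swap 0 1 ^ x.toAdd.val
  map_one' := by simp
  map_mul' := by
    intro x y
    change Equiv.swap (0 : ℤ) 1 ^ (x.toAdd + y.toAdd).val = _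
    generalize x.toAdd = a
    generalize y.toAdd = b
    rw [ZMod.val_add, ← pow_add]
    exact (pow_eq_pow_mod _ (by rw [pow_two, Equiv.swap_mul_self])).symm

/-- The action of `ℤ * ℤ/2` on `ℤ` by the unit translation and the transposition `(0 1)`. -/
def permHom : Q →* Equiv.Perm ℤ :=
  Coprod.lift (zpowersHom _ (Equiv.addRight (1 : ℤ))) swapHom

lemma addRight_mem_range (n : ℤ) : Equiv.addRight n ∈ permHom.range :=
  ⟨Coprod.inl (Multiplicative.ofAdd n), by simp [permHom, zpowersHom_apply]⟩

lemma swap_zero_one_mem_range : Equiv.swap (0 : ℤ) 1 ∈ permHom.range :=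
  ⟨Coprod.inr (Multiplicative.ofAdd 1), by simp [permHom, swapHom, ZMod.val_one]⟩

lemma swap_succ_mem_range (n : ℤ) : Equiv.swap n (n + 1) ∈ permHom.range := by
  have h := mul_mem (mul_mem (addRight_mem_range n) swap_zero_one_mem_range)
    (inv_mem (addRight_mem_range n))
  rw [← Equiv.swap_apply_apply] at h
  simpa [add_comm] using h

/-- The pair `(0, 1)` can be moved to any `(0, n)` with `n > 0`: the transposition
`(n n+1)` fixes `0` and raises the second entry by one. -/
lemma exists_zero_fixed (n : ℕ) : ∃ σ ∈ permHom.range, σ 0 = 0 ∧ σ 1 = (n : ℤ) + 1 := by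
  induction n with
  | zero => exact ⟨1, one_mem _, by simp⟩
  | succ n ih =>
    obtain ⟨σ, hσ, h0, h1⟩ := ih
    refine ⟨_, mul_mem (swap_succ_mem_range ((n : ℤ) + 1)) hσ, ?_, ?_⟩
    · rw [Equiv.Perm.mul_apply, h0, Equiv.swap_apply_of_ne_of_ne] <;> omega
    · rw [Equiv.Perm.mul_apply, h1, Equiv.swap_apply_left]; push_cast; ring

lemma exists_of_lt {x y : ℤ} (h : x < y) : ∃ σ ∈ permHom.range, σ 0 = x ∧ σ 1 = y := by
  obtain ⟨σ, hσ, h0, h1⟩ := exists_zero_fixed (y - x - 1).toNat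
  refine ⟨_, mul_mem (addRight_mem_range x) hσ, ?_, ?_⟩
  · simp [h0]
  · simp only [Equiv.Perm.mul_apply, h1, Equiv.coe_addRight]; omega

/-- The action of `ℤ * ℤ/2` on `ℤ` is 2-transitive. -/
lemma exists_of_ne {x y : ℤ} (h : x ≠ y) : ∃ q : Q, permHom q 0 = x ∧ permHom q 1 = y := by
  rcases lt_or_gt_of_ne h with h | h
  · obtain ⟨_, ⟨q, rfl⟩, h⟩ := exists_of_lt h
    exact ⟨q, h⟩
  · obtain ⟨σ, hσ, h0, h1⟩ := exists_of_lt h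
    obtain ⟨q, hq⟩ := mul_mem hσ swap_zero_one_mem_range
    exact ⟨q, by simp [hq, h0, h1]⟩

/-- The action of `ℤ * ℤ/2` on the free group on `ℤ` by permutation of the letters. -/
def autHom : Q →* MulAut (FreeGroup ℤ) where
  toFun q := FreeGroup.freeGroupCongr (permHom q)
  map_one' := by
    rw [map_one]
    exact FreeGroup.freeGroupCongr_refl
  map_mul' p q := by
    rw [map_mul]
    exact (FreeGroup.freeGroupCongr_trans (permHom q) (permHom p)).symm

lemma autHom_of (q : Q) (x : ℤ) :
    autHom q (FreeGroup.of x) = FreeGroup.of (permHom q x) := by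
  simp [autHom]

/-- The extension `F_∞ ⋊ (ℤ * ℤ/2)`. -/
abbrev E : Type := FreeGroup ℤ ⋊[autHom] Q

/-- The letter `x ∈ ℤ` as an element of `E`. -/
def letter (x : ℤ) : E := SemidirectProduct.inl (FreeGroup.of x)

lemma letter_permHom (q : Q) (x : ℤ) :
    letter (permHom q x) =
      SemidirectProduct.inr q * letter x * (SemidirectProduct.inr q)⁻¹ := by
  rw [letter, ← autHom_of, SemidirectProduct.inl_aut, map_inv]
  rfl

lemma fg_range {H K : Type*} [Group H] [Group K] [Group.FG H] (f : H →* K) : f.range.FG :=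
  (Group.fg_iff_subgroup_fg _).1 inferInstance

instance : Group.FG Q := by
  rw [Group.fg_def, ← Coprod.range_inl_sup_range_inr]
  exact (fg_range _).sup (fg_range _)

lemma fg_E : Group.FG E := by
  set K : Subgroup E := (SemidirectProduct.inr : Q →* E).range ⊔ Subgroup.closure {letter 0}
    with hK
  have hr : ∀ q, (SemidirectProduct.inr q : E) ∈ K := fun q ↦
    (le_sup_left : _ ≤ K) ⟨q, rfl⟩
  have h0 : letter 0 ∈ K := (le_sup_right : _ ≤ K) (Subgroup.subset_closure rfl)
  have hletter : ∀ x, letter x ∈ K := by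
    intro x
    obtain ⟨q, rfl, -⟩ := exists_of_ne (lt_add_one x).ne
    rw [letter_permHom]
    exact mul_mem (mul_mem (hr q) h0) (inv_mem (hr q))
  have hl : ∀ n, (SemidirectProduct.inl n : E) ∈ K := by
    intro n
    have : Subgroup.closure (Set.range FreeGroup.of) ≤
        K.comap (SemidirectProduct.inl : FreeGroup ℤ →* E) := by
      rw [Subgroup.closure_le]
      rintro _ ⟨x, rfl⟩
      exact hletter x
    rw [FreeGroup.closure_range_of] at this
    exact this (Subgroup.mem_top n)
  have htop : K = ⊤ := by
    rw [eq_top_iff]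
    intro g _
    rw [← SemidirectProduct.inl_left_mul_inr_right g]
    exact mul_mem (hl _) (hr _)
  rw [Group.fg_def, ← htop]
  exact (fg_range _).sup ⟨{letter 0}, by simp⟩

/-- The left coset of `ℤ * ℤ/2` in `E` represented by the letter `x`. -/
def letterCoset (x : ℤ) : Set E :=
  letter x • ((SemidirectProduct.inr : Q →* E).range : Set E)

lemma letter_mul_inr_mem (x : ℤ) (q : Q) :
    letter x * SemidirectProduct.inr q ∈ letterCoset x :=
  ⟨_, ⟨q, rfl⟩, rfl⟩

lemma letterCoset_injective : Function.Injective letterCoset := by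
  intro x y h
  have hx : letter x ∈ letterCoset y := h ▸ by simpa using letter_mul_inr_mem x 1
  obtain ⟨_, ⟨q, rfl⟩, hq⟩ := hx
  have := congrArg SemidirectProduct.left hq
  simp only [letter, smul_eq_mul, SemidirectProduct.mul_left, SemidirectProduct.left_inl,
    SemidirectProduct.left_inr, map_one, mul_one] at this
  exact (FreeGroup.of_injective this).symm

lemma cosetDist_letterCoset_le {d : E → E → ℝ} (hd : IsProperLeftInvMetric E d) (x y : ℤ) :
    cosetDist d (letterCoset x) (letterCoset y) ≤ d (letter 0) (letter 1) := by
  by_cases hxy : x = y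
  · subst hxy
    refine (cosetDist_le hd (letter_mul_inr_mem x 1) (letter_mul_inr_mem x 1)).trans ?_
    rw [hd.self]
    exact hd.nonneg_s19 _ _
  · obtain ⟨q, rfl, rfl⟩ := exists_of_ne hxy
    refine (cosetDist_le hd (letter_mul_inr_mem _ q) (letter_mul_inr_mem _ q)).trans_eq ?_
    rw [letter_permHom, letter_permHom, inv_mul_cancel_right, inv_mul_cancel_right,
      hd.left_invariant]

lemma not_hasBoundedPacking {d : E → E → ℝ} (hd : IsProperLeftInvMetric E d) :
    ¬ HasBoundedPacking d (SemidirectProduct.inr : Q →* E).range := by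
  intro h
  -- `D` has to be positive, hence the added `1`.
  obtain ⟨n, hn⟩ := h (d (letter 0) (letter 1) + 1) (by linarith [hd.nonneg_s19 (letter 0) (letter 1)])
  obtain ⟨T, hT, hcard⟩ :=
    (Set.infinite_range_of_injective letterCoset_injective).exists_subset_card_eq (n + 1)
  have := hn (Set.range letterCoset) (by rintro _ ⟨x, rfl⟩; exact ⟨letter x, rfl⟩)
    (by
      rintro _ ⟨x, rfl⟩ _ ⟨y, rfl⟩
      linarith [cosetDist_letterCoset_le hd x y]) T hT
  omega

end BoundedPackingExample

/-- There is a split exact sequence `1 → N → G → ℤ * (ℤ/2ℤ) → 1` with `G`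
finitely generated such that the image of the splitting (a copy of the free
product `ℤ * (ℤ/2ℤ)`) does not have bounded packing in `G`. -/
theorem exists_split_extension_of_free_product_without_boundedPacking :
    ∃ (N G : Type) (_ : Group N) (_ : Group G)
      (ι : N →* G)
      (π : G →* Monoid.Coprod (Multiplicative ℤ) (Multiplicative (ZMod 2)))
      (s : Monoid.Coprod (Multiplicative ℤ) (Multiplicative (ZMod 2)) →* G)
      (d : G → G → ℝ),
      Group.FG G ∧
      Function.Injective ι ∧
      Function.Surjective π ∧
      ι.range = π.ker ∧
      π.comp s = MonoidHom.id _ ∧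
      IsProperLeftInvMetric G d ∧
      ¬ HasBoundedPacking d s.range := by
  obtain ⟨d, hd⟩ :=
    BoundedPackingExample.exists_isProperLeftInvMetric BoundedPackingExample.fg_E
  exact ⟨FreeGroup ℤ, BoundedPackingExample.E, inferInstance, inferInstance,
    SemidirectProduct.inl, SemidirectProduct.rightHom, SemidirectProduct.inr, d,
    BoundedPackingExample.fg_E, SemidirectProduct.inl_injective,
    SemidirectProduct.rightHom_surjective, SemidirectProduct.range_inl_eq_ker_rightHom,
    SemidirectProduct.rightHom_comp_inr, hd, BoundedPackingExample.not_hasBoundedPacking hd⟩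
end
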